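/- arXiv:2206.10688 — 7 statements merged into one kernel-verified Lean document; each statement's English description precedes it below -/
import Mathlib

section
/- Let a, b ∈ ℂ \ {0} and γ ∈ ℂ with Re(γ) > 0, Re(γ) ∉ ℕ, and set k = ⌊Re(γ)⌋, assuming k ≥ 1. Then for every Schwartz function φ : ℝ → ℂ, every T > 0, and every x ∈ ℝ, one has I_{a,b}^{(γ;k)*}{y ↦ φ(T y)}(x) = T^{−γ} · (I_{a,b}^{(γ;k)*} φ)(T x); i.e., the adjoint integration operator is homogeneous (scale-invariant) of degree −γ. -/
/-!
Dilation by `T` turns `φ̂` into `T⁻¹ φ̂(T⁻¹ ·)`, hence multiplies the `j`-th Taylor coefficient at `0`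
by `T⁻¹ T⁻ʲ`, so the Taylor remainder of the dilated function is `T⁻¹` times the original remainder
at `T⁻¹ ω`. Since `h(-ω) = T^γ h(-T⁻¹ω)`, the integrand defining the left-hand side at `ω` is
`T^(-γ) T⁻¹` times the integrand of the right-hand side at `T⁻¹ ω`, and the substitution
`ω ↦ T⁻¹ ω` finishes the proof. Each step (change of variables, derivative of a dilation) holds for
arbitrary functions, as `∫` and `deriv` are `0` on both sides when integrability or differentiability
fails.
-/

open MeasureTheory Complex

/-- The homogeneous Fourier multiplier `h_{a,b}^γ`. -/
noncomputable def hab (a b γ : ℂ) (ω : ℝ) : ℂ :=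
  if 0 < ω then a * (ω : ℂ) ^ γ
  else if ω < 0 then b * ((-ω : ℝ) : ℂ) ^ γ
  else 0

/-- The Fourier transform `φ̂(ω) = ∫ φ(x) e^{-iωx} dx`. -/
noncomputable def FT (φ : ℝ → ℂ) (ω : ℝ) : ℂ :=
  ∫ x : ℝ, φ x * Complex.exp (-(Complex.I * (ω : ℂ) * (x : ℂ)))

/-- The complex-order derivative `D_{a,b}^γ`. -/
noncomputable def Dop (a b γ : ℂ) (φ : ℝ → ℂ) (x : ℝ) : ℂ :=
  (1 / (2 * (Real.pi : ℂ))) *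
    ∫ ω : ℝ, FT φ ω * hab a b γ ω * Complex.exp (Complex.I * (ω : ℂ) * (x : ℂ))

/-- The complex-order integration operator `I_{a,b}^{γ;k}`. -/
noncomputable def Iop (a b γ : ℂ) (k : ℕ) (φ : ℝ → ℂ) (x : ℝ) : ℂ :=
  (1 / (2 * (Real.pi : ℂ))) *
    ∫ ω : ℝ, FT φ ω *
      ((Complex.exp (Complex.I * (ω : ℂ) * (x : ℂ)) -
        ∑ j ∈ Finset.range k, (Complex.I * (x : ℂ)) ^ j * (ω : ℂ) ^ j / (j.factorial : ℂ)) /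
        hab a b γ ω)

/-- The adjoint integration operator `I_{a,b}^{(γ;k)*}`. -/
noncomputable def Istar (a b γ : ℂ) (k : ℕ) (φ : ℝ → ℂ) (x : ℝ) : ℂ :=
  (1 / (2 * (Real.pi : ℂ))) *
    ∫ ω : ℝ,
      (FT φ ω - ∑ j ∈ Finset.range k, iteratedDeriv j (FT φ) 0 * (ω : ℂ) ^ j / (j.factorial : ℂ)) /
        hab a b γ (-ω) * Complex.exp (Complex.I * (ω : ℂ) * (x : ℂ))

/-- Positive homogeneity of degree `γ` of the multiplier. -/
lemma hab_mul (a b γ : ℂ) {s : ℝ} (hs : 0 < s) (ω : ℝ) :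
    hab a b γ (s * ω) = (s : ℂ) ^ γ * hab a b γ ω := by
  unfold hab
  rcases lt_trichotomy ω 0 with h | h | h
  · have h1 : s * ω < 0 := mul_neg_of_pos_of_neg hs h
    rw [if_neg h1.not_gt, if_pos h1, if_neg h.not_gt, if_pos h, ← mul_neg, Complex.ofReal_mul,
      Complex.mul_cpow_ofReal_nonneg hs.le (by linarith)]
    ring
  · simp [h]
  · have h1 : 0 < s * ω := mul_pos hs h
    rw [if_pos h1, if_pos h, Complex.ofReal_mul, Complex.mul_cpow_ofReal_nonneg hs.le h.le]
    ring

lemma FT_dilate (φ : ℝ → ℂ) {T : ℝ} (hT : 0 < T) (ω : ℝ) :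
    FT (fun y => φ (T * y)) ω = ((T⁻¹ : ℝ) : ℂ) * FT φ (T⁻¹ * ω) := by
  have hT' : (T : ℂ) ≠ 0 := by exact_mod_cast hT.ne'
  have key := Measure.integral_comp_mul_left
    (fun x : ℝ => φ x * Complex.exp (-(Complex.I * ((T⁻¹ * ω : ℝ) : ℂ) * (x : ℂ)))) T
  rw [abs_of_pos (inv_pos.2 hT), Complex.real_smul] at key
  unfold FT
  rw [← key]
  congr 1
  ext x
  congr 3
  push_cast
  field_simp

/-- No differentiability of `f` is needed, because `deriv` commutes with dilations and constant
factors unconditionally. -/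
lemma iteratedDeriv_dilate (f : ℝ → ℂ) (c : ℂ) (s : ℝ) (j : ℕ) :
    iteratedDeriv j (fun ω => c * f (s * ω)) =
      fun ω => c * (s : ℂ) ^ j * iteratedDeriv j f (s * ω) := by
  induction j with
  | zero => simp
  | succ n ih =>
    ext ω
    rw [iteratedDeriv_succ, ih, iteratedDeriv_succ, deriv_const_mul_field,
      deriv_comp_mul_left s (iteratedDeriv n f) ω, Complex.real_smul]
    ring

/-- the adjoint integration operator `I_{a,b}^{(γ;k)*}` is homogeneous
(scale-invariant) of degree `-γ`. -/
theorem statement11 (a b γ : ℂ) (ha : a ≠ 0) (hb : b ≠ 0) (hγ : 0 < γ.re)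
    (hγ' : ∀ n : ℕ, γ.re ≠ (n : ℝ)) (k : ℕ) (hk : (k : ℤ) = ⌊γ.re⌋) (hk1 : 1 ≤ k)
    (φ : SchwartzMap ℝ ℂ) :
    ∀ T : ℝ, 0 < T → ∀ x : ℝ,
      Istar a b γ k (fun y => φ (T * y)) x = (T : ℂ) ^ (-γ) * Istar a b γ k ⇑φ (T * x) := by
  intro T hT x
  have hT' : (T : ℂ) ≠ 0 := by exact_mod_cast hT.ne'
  have hFT : FT (fun y => φ (T * y)) = fun ω => ((T⁻¹ : ℝ) : ℂ) * FT φ (T⁻¹ * ω) :=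
    funext (FT_dilate φ hT)
  have key := Measure.integral_comp_mul_left (fun ω : ℝ =>
      (FT φ ω - ∑ j ∈ Finset.range k, iteratedDeriv j (FT φ) 0 * (ω : ℂ) ^ j / (j.factorial : ℂ)) /
        hab a b γ (-ω) * Complex.exp (Complex.I * (ω : ℂ) * ((T * x : ℝ) : ℂ))) T⁻¹
  rw [inv_inv, abs_of_pos hT, Complex.real_smul] at key
  unfold Istar
  rw [mul_left_comm]
  congr 1
  -- Multiplying by `T` produces the Jacobian of `ω ↦ T⁻¹ ω` on the right.
  rw [← mul_right_inj' hT', mul_left_comm, ← key, ← integral_const_mul, ← integral_const_mul]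
  congr 1
  ext ω
  have hh : hab a b γ (-ω) = (T : ℂ) ^ γ * hab a b γ (-(T⁻¹ * ω)) := by
    rw [← hab_mul a b γ hT]
    congr 1
    field_simp
  have he : Complex.I * ((T⁻¹ * ω : ℝ) : ℂ) * ((T * x : ℝ) : ℂ) = Complex.I * (ω : ℂ) * (x : ℂ) := by
    push_cast
    field_simp
  have hsum : ∑ j ∈ Finset.range k,
        iteratedDeriv j (FT (fun y => φ (T * y))) 0 * (ω : ℂ) ^ j / (j.factorial : ℂ) =
      ((T⁻¹ : ℝ) : ℂ) * ∑ j ∈ Finset.range k,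
        iteratedDeriv j (FT φ) 0 * ((T⁻¹ * ω : ℝ) : ℂ) ^ j / (j.factorial : ℂ) := by
    rw [Finset.mul_sum]
    refine Finset.sum_congr rfl fun j _ => ?_
    rw [hFT, iteratedDeriv_dilate]
    beta_reduce
    rw [mul_zero]
    push_cast
    rw [mul_pow]
    ring
  rw [hsum, hh, he, FT_dilate φ hT, ← mul_sub, Complex.cpow_neg, Complex.ofReal_inv,
    div_eq_mul_inv, div_eq_mul_inv, mul_inv]
  simp only [← mul_assoc]
  rw [mul_inv_cancel₀ hT']
  ring
end

section
/- Let φ : ℝ \ {0} → ℂ, let c > 0, m ∈ ℝ and γ ∈ ℂ with m ≠ Re(γ), and suppose that |φ(x) − T^γ·φ(T x)| ≤ c/|x|^m for every x ∈ ℝ \ {0} and every T ∈ [2, 4). Then there exists a constant c̄ > 0 such that |φ(x)| ≤ c̄ / min(|x|^{Re(γ)}, |x|^m) for all x ∈ ℝ \ {0}. -/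
/-!
On the half-line `x > 0` put `g x = x ^ γ * ψ x` and `δ = Re γ - m ≠ 0`. The hypothesis becomes
`‖g x - g (T x)‖ ≤ c x ^ δ` for `T ∈ [2, 4)`.

* Every `y ∈ (3/4, 3/2]` can be moved to the single point `3` by a factor `3 / y ∈ [2, 4)`, so `g`
  is bounded on `(3/4, 3/2]` although no regularity is assumed.
* Every `x > 0` is `2 ^ n * y` with `n ∈ ℤ` and such a `y`. Since `δ ≠ 0`,
  `c t ^ δ = K ((2 t) ^ δ - t ^ δ)` with `K = c / (2 ^ δ - 1)`, so the estimates for `T = 2`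
  telescope to `‖g x - g y‖ ≤ |K x ^ δ - K y ^ δ|`.

Hence `‖g x‖ ≤ A + |K| x ^ δ`, and dividing by `x ^ Re γ` gives the bound. The two half-lines are
handled by applying this to `x ↦ φ x` and `x ↦ φ (-x)`.
-/

open MeasureTheory Complex

/-- Telescoping over `ℤ`: increments of `G` dominated by those of a real sequence `F`. -/
lemma norm_le_add_abs_of_step (G : ℤ → ℂ) (F : ℤ → ℝ)
    (hs : ∀ n, ‖G n - G (n + 1)‖ ≤ F (n + 1) - F n) (n : ℤ) :
    ‖G n‖ ≤ ‖G 0‖ + |F n - F 0| := by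
  have key : ∀ k n : ℤ, k ≤ n → ‖G k - G n‖ ≤ F n - F k := by
    intro k n hkn
    induction n, hkn using Int.leInduction with
    | base => simp
    | succ n _ ih =>
      have := norm_sub_le_norm_sub_add_norm_sub (G k) (G n) (G (n + 1))
      linarith [hs n]
  rcases le_total 0 n with h | h
  · have h1 := key 0 n h
    have h2 := norm_sub_norm_le (G n) (G 0)
    rw [norm_sub_rev] at h2
    linarith [le_abs_self (F n - F 0)]
  · have h1 := key n 0 h
    have h2 := norm_sub_norm_le (G n) (G 0)
    linarith [neg_abs_le (F n - F 0)]

/-- The bound on the positive half-line. -/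
lemma exists_bound_pos (ψ : ℝ → ℂ) (c : ℝ) (hc : 0 < c) (m : ℝ) (γ : ℂ) (hm : m ≠ γ.re)
    (h : ∀ x : ℝ, 0 < x → ∀ T : ℝ, T ∈ Set.Ico (2 : ℝ) 4 →
      ‖ψ x - (T : ℂ) ^ γ * ψ (T * x)‖ ≤ c / x ^ m) :
    ∃ C : ℝ, 0 < C ∧ ∀ x : ℝ, 0 < x → ‖ψ x‖ ≤ C / min (x ^ γ.re) (x ^ m) := by
  set δ : ℝ := γ.re - m with hδ
  have hδ0 : δ ≠ 0 := sub_ne_zero.mpr hm.symm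
  set g : ℝ → ℂ := fun x => (x : ℂ) ^ γ * ψ x with hg
  have hgn : ∀ x : ℝ, 0 < x → ‖g x‖ = x ^ γ.re * ‖ψ x‖ := by
    intro x hx
    rw [hg, norm_mul, norm_cpow_eq_rpow_re_of_pos hx]
  have hstep : ∀ x : ℝ, 0 < x → ∀ T : ℝ, T ∈ Set.Ico (2 : ℝ) 4 →
      ‖g x - g (T * x)‖ ≤ c * x ^ δ := by
    intro x hx T hT
    have hT0 : (0 : ℝ) ≤ T := by linarith [hT.1]
    have e : g x - g (T * x) = (x : ℂ) ^ γ * (ψ x - (T : ℂ) ^ γ * ψ (T * x)) := by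
      simp only [hg, Complex.ofReal_mul, mul_cpow_ofReal_nonneg hT0 hx.le]
      ring
    rw [e, norm_mul, norm_cpow_eq_rpow_re_of_pos hx]
    calc x ^ γ.re * ‖ψ x - (T : ℂ) ^ γ * ψ (T * x)‖ ≤ x ^ γ.re * (c / x ^ m) := by
          gcongr
          exact h x hx T hT
      _ = c * x ^ δ := by
          rw [hδ, Real.rpow_sub hx]
          ring
  have hK0 : (2 : ℝ) ^ δ - 1 ≠ 0 := by
    rcases lt_or_gt_of_ne hδ0 with h0 | h0
    · have := Real.rpow_lt_one_of_one_lt_of_neg one_lt_two h0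
      exact ne_of_lt (by linarith)
    · have := Real.one_lt_rpow one_lt_two h0
      exact ne_of_gt (by linarith)
  set K : ℝ := c / ((2 : ℝ) ^ δ - 1) with hK
  set M : ℝ := (3 / 4 : ℝ) ^ δ + (3 / 2 : ℝ) ^ δ with hM
  have hM0 : 0 < M := by positivity
  have hyM : ∀ y : ℝ, 3 / 4 < y → y ≤ 3 / 2 → y ^ δ ≤ M := by
    intro y h1 h2
    have p1 : (0 : ℝ) < (3 / 4 : ℝ) ^ δ := by positivity
    have p2 : (0 : ℝ) < (3 / 2 : ℝ) ^ δ := by positivity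
    rcases le_total δ 0 with h0 | h0
    · linarith [Real.rpow_le_rpow_of_nonpos (by norm_num : (0 : ℝ) < 3 / 4) h1.le h0]
    · linarith [Real.rpow_le_rpow (by linarith : 0 ≤ y) h2 h0]
  have hgy : ∀ y : ℝ, 3 / 4 < y → y ≤ 3 / 2 → ‖g y‖ ≤ ‖g 3‖ + c * M := by
    intro y h1 h2
    have hy : 0 < y := by linarith
    have h3 := hstep y hy (3 / y) ⟨by rw [le_div_iff₀ hy]; linarith,
      by rw [div_lt_iff₀ hy]; linarith⟩
    rw [div_mul_cancel₀ _ hy.ne'] at h3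
    have h4 := norm_sub_norm_le (g y) (g 3)
    have h5 := mul_le_mul_of_nonneg_left (hyM y h1 h2) hc.le
    linarith
  have hgx : ∀ x : ℝ, 0 < x → ‖g x‖ ≤ (‖g 3‖ + c * M + |K| * M) + |K| * x ^ δ := by
    intro x hx
    obtain ⟨n, hn1, hn2⟩ := exists_mem_Ioc_zpow (x := x / (3 / 4)) (by positivity) one_lt_two
    have hp : (0 : ℝ) < 2 ^ n := by positivity
    obtain ⟨y, rfl⟩ : ∃ y, x = 2 ^ n * y := ⟨x / 2 ^ n, by field_simp⟩
    rw [zpow_add_one₀ two_ne_zero] at hn2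
    rw [lt_div_iff₀ (by norm_num)] at hn1
    rw [div_le_iff₀ (by norm_num)] at hn2
    have y1 : 3 / 4 < y := lt_of_mul_lt_mul_left hn1 hp.le
    have y2 : y ≤ 3 / 2 := le_of_mul_le_mul_left (by linarith) hp
    have hy : 0 < y := by linarith
    have h1 := norm_le_add_abs_of_step (fun k => g (2 ^ k * y))
      (fun k => K * ((2 : ℝ) ^ k * y) ^ δ) (by
        intro k
        have hk : (0 : ℝ) < 2 ^ k * y := by positivity
        have e : (2 : ℝ) ^ (k + 1) * y = 2 * (2 ^ k * y) := by
          rw [zpow_add_one₀ two_ne_zero]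
          ring
        have h2 := hstep _ hk 2 ⟨le_rfl, by norm_num⟩
        simp only [e]
        refine h2.trans (le_of_eq ?_)
        rw [Real.mul_rpow zero_le_two hk.le, hK]
        field_simp) n
    simp only [zpow_zero, one_mul] at h1
    have h2 := hgy y y1 y2
    have h3 : |K * ((2 : ℝ) ^ n * y) ^ δ - K * y ^ δ| ≤ |K| * (2 ^ n * y) ^ δ + |K| * M := by
      refine (abs_sub _ _).trans ?_
      rw [abs_mul, abs_mul, abs_of_pos (Real.rpow_pos_of_pos hx δ),
        abs_of_pos (Real.rpow_pos_of_pos hy δ)]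
      gcongr
      exact hyM y y1 y2
    linarith
  refine ⟨(‖g 3‖ + c * M + |K| * M) + |K|, by positivity, fun x hx => ?_⟩
  have q1 : 0 < x ^ γ.re := Real.rpow_pos_of_pos hx _
  have q2 : 0 < x ^ m := Real.rpow_pos_of_pos hx _
  have q : 0 < min (x ^ γ.re) (x ^ m) := lt_min q1 q2
  have h1 := hgx x hx
  rw [hgn x hx] at h1
  calc ‖ψ x‖ ≤ ((‖g 3‖ + c * M + |K| * M) + |K| * x ^ δ) / x ^ γ.re := by
        rw [le_div_iff₀ q1]
        linarith
    _ = (‖g 3‖ + c * M + |K| * M) / x ^ γ.re + |K| / x ^ m := by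
        rw [hδ, Real.rpow_sub hx]
        field_simp
    _ ≤ (‖g 3‖ + c * M + |K| * M) / min (x ^ γ.re) (x ^ m)
          + |K| / min (x ^ γ.re) (x ^ m) := by
        gcongr
        · exact min_le_left _ _
        · exact min_le_right _ _
    _ = _ := by ring

/-- if `|φ(x) − T^γ φ(Tx)| ≤ c/|x|^m` for all `x ≠ 0` and `T ∈ [2,4)`,
with `m ≠ Re γ`, then `|φ(x)| ≤ c̄ / min(|x|^{Re γ}, |x|^m)`. -/
theorem statement13 (φ : ℝ → ℂ) (c : ℝ) (hc : 0 < c) (m : ℝ) (γ : ℂ) (hm : m ≠ γ.re)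
    (h : ∀ x : ℝ, x ≠ 0 → ∀ T : ℝ, T ∈ Set.Ico (2 : ℝ) 4 →
      ‖φ x - (T : ℂ) ^ γ * φ (T * x)‖ ≤ c / |x| ^ m) :
    ∃ cbar : ℝ, 0 < cbar ∧ ∀ x : ℝ, x ≠ 0 →
      ‖φ x‖ ≤ cbar / min (|x| ^ γ.re) (|x| ^ m) := by
  obtain ⟨C₁, hC₁, h₁⟩ := exists_bound_pos φ c hc m γ hm (fun x hx T hT => by
    have := h x hx.ne' T hT
    rwa [abs_of_pos hx] at this)
  obtain ⟨C₂, hC₂, h₂⟩ := exists_bound_pos (fun x => φ (-x)) c hc m γ hm (fun x hx T hT => by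
    have := h (-x) (neg_ne_zero.mpr hx.ne') T hT
    rwa [abs_neg, abs_of_pos hx, mul_neg] at this)
  refine ⟨C₁ + C₂, by positivity, fun x hx => ?_⟩
  have q : 0 < min (|x| ^ γ.re) (|x| ^ m) :=
    lt_min (Real.rpow_pos_of_pos (abs_pos.mpr hx) _) (Real.rpow_pos_of_pos (abs_pos.mpr hx) _)
  rcases lt_or_gt_of_ne hx with hneg | hpos
  · have h3 := h₂ (-x) (neg_pos.mpr hneg)
    rw [neg_neg, ← abs_of_neg hneg] at h3
    exact h3.trans (by gcongr; linarith)
  · have h3 := h₁ x hpos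
    nth_rewrite 2 3 [← abs_of_pos hpos] at h3
    exact h3.trans (by gcongr; linarith)
end

section
/- Let φ : ℝ \ {0} → ℂ, let c > 0 and γ ∈ ℂ, set m = Re(γ), and suppose that |φ(x) − T^γ·φ(T x)| ≤ c/|x|^m for every x ∈ ℝ \ {0} and every T ∈ [2, 4). Then there exists a constant c̄ > 0 such that |φ(x)| ≤ c̄ · (1 + |log|x||) / |x|^{Re(γ)} for all x ∈ ℝ \ {0}. -/
/-!
Put `ψ x = |x| ^ γ * φ x`. Multiplying the hypothesis by `|x| ^ Re γ` turns it into the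
scale-invariant estimate `‖ψ x - ψ (T x)‖ ≤ c` for `T ∈ [2, 4)` (`norm_normalized_sub_le`), and the
conclusion into `‖ψ x‖ ≤ C (1 + |log |x||)`.

Write `x = 2 ^ k * r` with `1 ≤ |r| < 2`. Going from `r` to `x` by dilations with `T = 2` costs at
most `|k| c`, and `|k|` is controlled by `|log |x||`. The remaining point is that `ψ` is bounded on
`1 ≤ |r| < 2`, although no local regularity is assumed: the point `2 r` is the dilate of `r` by
`2` and of `r / |r| = ±1` by `2 |r| ∈ [2, 4)`, so `ψ r` is within `2 c` of `ψ (±1)`. This is where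
the whole range of `T` is needed.
-/

/-- The function `|x| ^ γ * φ x`, for which the hypothesis becomes scale invariant. -/
noncomputable def normalized (φ : ℝ → ℂ) (γ : ℂ) (x : ℝ) : ℂ :=
  ((|x| : ℝ) : ℂ) ^ γ * φ x

lemma norm_normalized (φ : ℝ → ℂ) (γ : ℂ) {x : ℝ} (hx : x ≠ 0) :
    ‖normalized φ γ x‖ = |x| ^ γ.re * ‖φ x‖ := by
  rw [normalized, norm_mul, Complex.norm_cpow_eq_rpow_re_of_pos (abs_pos.2 hx)]

lemma norm_normalized_sub_le {φ : ℝ → ℂ} {c : ℝ} {γ : ℂ}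
    (h : ∀ x : ℝ, x ≠ 0 → ∀ T : ℝ, T ∈ Set.Ico (2 : ℝ) 4 →
      ‖φ x - (T : ℂ) ^ γ * φ (T * x)‖ ≤ c / |x| ^ γ.re)
    {x : ℝ} (hx : x ≠ 0) {T : ℝ} (hT : T ∈ Set.Ico (2 : ℝ) 4) :
    ‖normalized φ γ x - normalized φ γ (T * x)‖ ≤ c := by
  have hT0 : 0 < T := by linarith [hT.1]
  have hx0 : 0 < |x| := abs_pos.2 hx
  have heq : normalized φ γ x - normalized φ γ (T * x)
      = ((|x| : ℝ) : ℂ) ^ γ * (φ x - (T : ℂ) ^ γ * φ (T * x)) := by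
    rw [normalized, normalized, abs_mul, abs_of_pos hT0, Complex.ofReal_mul,
      Complex.mul_cpow_ofReal_nonneg hT0.le hx0.le]
    ring
  rw [heq, norm_mul, Complex.norm_cpow_eq_rpow_re_of_pos hx0, mul_comm]
  exact (le_div_iff₀ (Real.rpow_pos_of_pos hx0 _)).1 (h x hx T hT)

lemma norm_sub_two_pow_mul_le {ψ : ℝ → ℂ} {c : ℝ}
    (h : ∀ x : ℝ, x ≠ 0 → ‖ψ x - ψ (2 * x)‖ ≤ c) {x : ℝ} (hx : x ≠ 0) (n : ℕ) :
    ‖ψ x - ψ (2 ^ n * x)‖ ≤ n * c := by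
  induction n with
  | zero => simp
  | succ n ih =>
    have h1 := h (2 ^ n * x) (by positivity)
    have h2 := norm_sub_le_norm_sub_add_norm_sub (ψ x) (ψ (2 ^ n * x)) (ψ (2 * (2 ^ n * x)))
    have h3 : (2 : ℝ) ^ (n + 1) * x = 2 * (2 ^ n * x) := by ring
    rw [h3]
    push_cast
    linarith

lemma norm_sub_two_zpow_mul_le {ψ : ℝ → ℂ} {c : ℝ}
    (h : ∀ x : ℝ, x ≠ 0 → ‖ψ x - ψ (2 * x)‖ ≤ c) {x : ℝ} (hx : x ≠ 0) (k : ℤ) :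
    ‖ψ x - ψ (2 ^ k * x)‖ ≤ |(k : ℝ)| * c := by
  obtain ⟨n, rfl | rfl⟩ := k.eq_nat_or_neg
  · simpa using norm_sub_two_pow_mul_le h hx n
  · have h1 := norm_sub_two_pow_mul_le h (x := 2 ^ (-(n : ℤ)) * x) (by positivity) n
    have h2 : (2 : ℝ) ^ n * (2 ^ (-(n : ℤ)) * x) = x := by
      rw [zpow_neg, zpow_natCast]
      field_simp
    rw [h2, norm_sub_rev] at h1
    simpa using h1

/-- Boundedness on the annulus `1 ≤ |r| < 2`, by comparing `r` and `r / |r|` with `2 * r`. -/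
lemma norm_le_of_one_le_of_lt_two {ψ : ℝ → ℂ} {c : ℝ}
    (h : ∀ x : ℝ, x ≠ 0 → ∀ T : ℝ, T ∈ Set.Ico (2 : ℝ) 4 → ‖ψ x - ψ (T * x)‖ ≤ c)
    {r : ℝ} (h1 : 1 ≤ |r|) (h2 : |r| < 2) :
    ‖ψ r‖ ≤ ‖ψ 1‖ + ‖ψ (-1)‖ + 2 * c := by
  have hr : r ≠ 0 := abs_pos.1 (by linarith)
  have hA := h r hr 2 ⟨le_rfl, by norm_num⟩
  have hT : 2 * |r| ∈ Set.Ico (2 : ℝ) 4 := ⟨by linarith, by linarith⟩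
  have key : ∀ s : ℝ, s ≠ 0 → |r| * s = r → ‖ψ r‖ ≤ ‖ψ s‖ + 2 * c := by
    intro s hs hsr
    have hB := h s hs _ hT
    rw [mul_assoc, hsr] at hB
    have h3 := norm_sub_le_norm_sub_add_norm_sub (ψ r) (ψ (2 * r)) (ψ s)
    rw [norm_sub_rev (ψ (2 * r))] at h3
    linarith [norm_sub_norm_le (ψ r) (ψ s)]
  rcases abs_choice r with hs | hs
  · linarith [key 1 one_ne_zero (by rw [hs]; ring), norm_nonneg (ψ (-1))]
  · linarith [key (-1) (by norm_num) (by rw [hs]; ring), norm_nonneg (ψ 1)]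

lemma abs_exponent_le {y : ℝ} {k : ℤ} (hk : y ∈ Set.Ico ((2 : ℝ) ^ k) (2 ^ (k + 1))) :
    |(k : ℝ)| ≤ 2 * |Real.log y| + 1 := by
  have hpos : (0 : ℝ) < 2 ^ k := by positivity
  have hlow := Real.log_le_log hpos hk.1
  have hupp := Real.log_le_log (hpos.trans_le hk.1) hk.2.le
  rw [Real.log_zpow] at hlow hupp
  push_cast at hupp
  have hlog := Real.log_two_gt_d9
  have h1 := le_abs_self (Real.log y)
  have h2 := neg_abs_le (Real.log y)
  refine abs_le.2 ⟨?_, ?_⟩ <;> by_contra! hcon <;> nlinarith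


open MeasureTheory Complex

/-- logarithmic variant of Statement 13, for the critical case `m = Re γ`. -/
theorem statement14 (φ : ℝ → ℂ) (c : ℝ) (hc : 0 < c) (γ : ℂ)
    (h : ∀ x : ℝ, x ≠ 0 → ∀ T : ℝ, T ∈ Set.Ico (2 : ℝ) 4 →
      ‖φ x - (T : ℂ) ^ γ * φ (T * x)‖ ≤ c / |x| ^ γ.re) :
    ∃ cbar : ℝ, 0 < cbar ∧ ∀ x : ℝ, x ≠ 0 →
      ‖φ x‖ ≤ cbar * (1 + |Real.log (|x|)|) / |x| ^ γ.re := by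
  have hψ := fun x hx T hT => norm_normalized_sub_le h (x := x) hx (T := T) hT
  set ψ := normalized φ γ with hψdef
  refine ⟨‖ψ 1‖ + ‖ψ (-1)‖ + 3 * c, by positivity, fun x hx => ?_⟩
  have hx0 : 0 < |x| := abs_pos.2 hx
  rw [le_div_iff₀ (Real.rpow_pos_of_pos hx0 _), mul_comm, ← norm_normalized φ γ hx, ← hψdef]
  obtain ⟨k, hk⟩ := exists_mem_Ico_zpow hx0 (one_lt_two (α := ℝ))
  have hpos : (0 : ℝ) < 2 ^ k := by positivity
  obtain ⟨r, rfl⟩ : ∃ r, x = 2 ^ k * r := ⟨x / 2 ^ k, by field_simp⟩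
  have hr : r ≠ 0 := right_ne_zero_of_mul hx
  have habs : |2 ^ k * r| = 2 ^ k * |r| := by rw [abs_mul, abs_of_pos hpos]
  have hexp := abs_exponent_le hk
  rw [habs, zpow_add_one₀ two_ne_zero] at hk
  have hr1 : 1 ≤ |r| := le_of_mul_le_mul_left (by linarith [hk.1]) hpos
  have hr2 : |r| < 2 := lt_of_mul_lt_mul_left hk.2 hpos.le
  have hbase := norm_le_of_one_le_of_lt_two hψ hr1 hr2
  have hstep := norm_sub_two_zpow_mul_le
    (fun y hy => hψ y hy 2 ⟨le_rfl, by norm_num⟩) hr k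
  have htri := norm_sub_norm_le (ψ (2 ^ k * r)) (ψ r)
  rw [norm_sub_rev] at htri
  have hkc := mul_le_mul_of_nonneg_right hexp hc.le
  have hlog := abs_nonneg (Real.log |2 ^ k * r|)
  nlinarith [mul_nonneg (norm_nonneg (ψ 1)) hlog, mul_nonneg (norm_nonneg (ψ (-1))) hlog,
    mul_nonneg hc.le hlog]
end

section
/- Let k ≥ 1 and n ≥ 0 be integers and let φ : ℝ → ℂ be (k+n) times continuously differentiable. Define ψ : ℝ → ℂ by ψ(x) = (φ(x) − Σ_{j=0}^{k−1} φ^{(j)}(0) x^j / j!) / x^k for x ≠ 0 and ψ(0) = φ^{(k)}(0)/k!. Then ψ is n times continuously differentiable on ℝ. -/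
/-!
Taylor's theorem with integral remainder, rescaled by `t ↦ t * x`, gives, with `m = k - 1`,
`ψ x = ∫ t in 0..1, ((1 - t) ^ m / m!) • φ⁽ᵏ⁾ (t * x)`
for `x ≠ 0` (`taylor_remainder_eq_integral`); the same formula holds at `x = 0`, because
`∫ t in 0..1, (1 - t) ^ m / m! = 1 / k!`. Since `φ⁽ᵏ⁾` is `C^n`, differentiating `n` times under
the integral sign shows that the right-hand side is `C^n` (`contDiff_integral_smul_comp_mul`).
-/

open MeasureTheory Complex

/-- Differentiation under the integral sign; the derivative of `g (t * x)` in `x` contributes an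
extra factor `t`, which is absorbed in the weight. -/
lemma hasDerivAt_integral_smul_comp_mul {w : ℝ → ℝ} (hw : Continuous w) {g : ℝ → ℂ}
    (hg : ContDiff ℝ 1 g) (x : ℝ) :
    HasDerivAt (fun x : ℝ => ∫ t in (0 : ℝ)..1, w t • g (t * x))
      (∫ t in (0 : ℝ)..1, (w t * t) • deriv g (t * x)) x := by
  have hg0 : Continuous g := hg.continuous
  have hg1 : Continuous (deriv g) := hg.continuous_deriv le_rfl
  have hd : Differentiable ℝ g := hg.differentiable one_ne_zero
  -- A constant dominates the derivative of the integrand for `(y, t)` in a compact rectangle.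
  obtain ⟨C, hC⟩ := ((isCompact_closedBall x 1).prod
    (isCompact_Icc (a := (0 : ℝ)) (b := 1))).exists_bound_of_continuousOn
    (f := fun p : ℝ × ℝ => (w p.2 * p.2) • deriv g (p.2 * p.1)) (by fun_prop)
  refine (intervalIntegral.hasDerivAt_integral_of_dominated_loc_of_deriv_le
    (F := fun x t => w t • g (t * x)) (F' := fun x t => (w t * t) • deriv g (t * x))
    (bound := fun _ => C) (Metric.closedBall_mem_nhds x one_pos)
    (Filter.Eventually.of_forall fun y => ?_) ?_ ?_ ?_ (by simp) ?_).2
  · exact Continuous.aestronglyMeasurable (by fun_prop)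
  · exact Continuous.intervalIntegrable (by fun_prop) _ _
  · exact Continuous.aestronglyMeasurable (by fun_prop)
  · refine Filter.Eventually.of_forall fun t ht y hy => hC (y, t) ⟨hy, ?_⟩
    rw [Set.uIoc_of_le zero_le_one] at ht
    exact ⟨ht.1.le, ht.2⟩
  · refine Filter.Eventually.of_forall fun t _ y _ => ?_
    have h := ((hd (t * y)).hasDerivAt.scomp y ((hasDerivAt_id y).const_mul t)).const_smul (w t)
    simpa [Function.comp_def, Pi.smul_def, smul_smul, mul_assoc] using h

lemma contDiff_integral_smul_comp_mul (n : ℕ) {w : ℝ → ℝ} (hw : Continuous w) {g : ℝ → ℂ}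
    (hg : ContDiff ℝ n g) :
    ContDiff ℝ n (fun x : ℝ => ∫ t in (0 : ℝ)..1, w t • g (t * x)) := by
  induction n generalizing w g with
  | zero =>
    have hg0 : Continuous g := hg.continuous
    rw [Nat.cast_zero, contDiff_zero]
    exact intervalIntegral.continuous_parametric_intervalIntegral_of_continuous'
      (f := fun x t : ℝ => w t • g (t * x)) (by fun_prop) 0 1
  | succ n ih =>
    have hg1 : ContDiff ℝ 1 g := hg.of_le (by norm_cast; omega)
    have hder := hasDerivAt_integral_smul_comp_mul hw hg1
    rw [Nat.cast_succ, contDiff_succ_iff_deriv] at hg ⊢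
    refine ⟨fun x => (hder x).differentiableAt, by simp, ?_⟩
    rw [funext fun x => (hder x).deriv]
    exact ih (hw.mul continuous_id) hg.2.2

/-- Taylor's theorem at `0` with integral remainder, on the unit interval. -/
lemma taylor_remainder_eq_integral (m : ℕ) {φ : ℝ → ℂ} (hφ : ContDiff ℝ (m + 1 : ℕ) φ)
    {x : ℝ} (hx : x ≠ 0) :
    φ x - ∑ j ∈ Finset.range (m + 1), iteratedDeriv j φ 0 * (x : ℂ) ^ j / (j.factorial : ℂ) =
      (x : ℂ) ^ (m + 1) *
        ∫ t in (0 : ℝ)..1, ((1 - t) ^ m / m.factorial) • iteratedDeriv (m + 1) φ (t * x) := by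
  have hu : UniqueDiffOn ℝ (Set.uIcc 0 x) := uniqueDiffOn_uIcc hx.symm
  have hD : ∀ j ≤ m + 1, ∀ t ∈ Set.uIcc 0 x,
      iteratedDerivWithin j φ (Set.uIcc 0 x) t = iteratedDeriv j φ t := fun j hj t ht =>
    iteratedDerivWithin_eq_iteratedDeriv hu
      (hφ.contDiffAt.of_le (by exact_mod_cast hj)) ht
  have hsum : taylorWithinEval φ m (Set.uIcc 0 x) 0 x =
      ∑ j ∈ Finset.range (m + 1), iteratedDeriv j φ 0 * (x : ℂ) ^ j / (j.factorial : ℂ) := by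
    rw [taylor_within_apply]
    refine Finset.sum_congr rfl fun j hj => ?_
    rw [hD j (Finset.mem_range.1 hj).le 0 Set.left_mem_uIcc, Complex.real_smul]
    push_cast
    ring
  have hint : ∫ t in (0 : ℝ)..x, ((x - t) ^ m / m.factorial) •
        iteratedDerivWithin (m + 1) φ (Set.uIcc 0 x) t =
      ∫ t in (0 : ℝ)..x, ((x - t) ^ m / m.factorial) • iteratedDeriv (m + 1) φ t :=
    intervalIntegral.integral_congr fun t ht => by
      simp only [hD (m + 1) le_rfl t ht]
  have hscale := intervalIntegral.smul_integral_comp_mul_right (a := 0) (b := 1)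
    (fun t : ℝ => ((x - t) ^ m / m.factorial) • iteratedDeriv (m + 1) φ t) x
  rw [zero_mul, one_mul] at hscale
  rw [← hsum, taylor_integral_remainder hφ.contDiffOn, hint, ← hscale, pow_succ', mul_assoc,
    Complex.real_smul, ← Complex.ofReal_pow, ← Complex.real_smul (x := x ^ m),
    ← intervalIntegral.integral_smul]
  congr 1
  refine intervalIntegral.integral_congr fun t _ => ?_
  simp only [smul_smul]
  congr 1
  rw [← one_sub_mul, mul_pow]
  ring

lemma integral_one_sub_pow_div_factorial (m : ℕ) :
    ∫ t in (0 : ℝ)..1, (1 - t) ^ m / (m.factorial : ℝ) = 1 / ((m + 1).factorial : ℝ) := by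
  rw [intervalIntegral.integral_div,
    intervalIntegral.integral_comp_sub_left (fun t : ℝ => t ^ m) 1, integral_pow,
    Nat.factorial_succ]
  push_cast
  simp
  ring

/-- the Taylor-remainder quotient `ψ` of a `C^{k+n}` function `φ` is `C^n`. -/
theorem statement15 (k n : ℕ) (hk : 1 ≤ k) (φ : ℝ → ℂ) (hφ : ContDiff ℝ (k + n) φ)
    (ψ : ℝ → ℂ)
    (hψ : ∀ x : ℝ, x ≠ 0 → ψ x =
      (φ x - ∑ j ∈ Finset.range k, iteratedDeriv j φ 0 * (x : ℂ) ^ j / (j.factorial : ℂ)) /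
        (x : ℂ) ^ k)
    (hψ0 : ψ 0 = iteratedDeriv k φ 0 / (k.factorial : ℂ)) :
    ContDiff ℝ n ψ := by
  obtain ⟨m, rfl⟩ : ∃ m, k = m + 1 := ⟨k - 1, by omega⟩
  have hg : ContDiff ℝ n (iteratedDeriv (m + 1) φ) := by
    rw [iteratedDeriv_eq_iterate]
    exact ContDiff.iterate_deriv' n (m + 1) (hφ.of_le (by norm_cast; omega))
  have hφ' : ContDiff ℝ (m + 1 : ℕ) φ := hφ.of_le (by norm_cast; omega)
  have key : ψ = fun x : ℝ => ∫ t in (0 : ℝ)..1,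
      ((1 - t) ^ m / (m.factorial : ℝ)) • iteratedDeriv (m + 1) φ (t * x) := by
    funext x
    rcases eq_or_ne x 0 with rfl | hx
    · simp only [mul_zero]
      rw [hψ0, intervalIntegral.integral_smul_const, integral_one_sub_pow_div_factorial,
        Complex.real_smul]
      push_cast
      ring
    · have hxk : (x : ℂ) ^ (m + 1) ≠ 0 := pow_ne_zero _ (Complex.ofReal_ne_zero.2 hx)
      rw [hψ x hx, taylor_remainder_eq_integral m hφ' hx, mul_div_cancel_left₀ _ hxk]
  rw [key]
  exact contDiff_integral_smul_comp_mul n (by fun_prop) hg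
end

section
/- Let a, b ∈ ℂ \ {0} and γ ∈ ℂ with −1 < Re(γ) < 0, and let φ : ℝ → ℂ be a Schwartz function. Then for every x ∈ ℝ, (1/(2π)) ∫_ℝ φ̂(ω) h_{a,b}^γ(ω) e^{iωx} dω = (Γ(γ+1)/(2π)) ∫_ℝ φ(τ) · [ a·(i(τ−x))^{−(γ+1)} + b·(i(x−τ))^{−(γ+1)} ] dτ, where both integrals converge absolutely and z^{−(γ+1)} denotes the principal branch of the complex power. (This is the kernel representation of the complex-order derivative D_{a,b}^γ, i.e., the formula D_{a,b}^γ{δ(·−τ)}(x) = (Γ(γ+1)/(2π))·(a/(iτ−ix)^{γ+1} + b/(ix−iτ)^{γ+1}) tested against φ.) -/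
/-!
Put `s = γ + 1`, so `0 < re s < 1`. The two half-lines are treated separately. On `ω > 0` one wants
`∫₀^∞ φ̂(ω) ω^(s-1) e^{iωx} dω = Γ(s) ∫ φ(τ) (i(τ - x))^(-s) dτ` (`halfLine`), and the half-line
`ω < 0` is the same statement for the reflected function `τ ↦ φ(-τ)` at the point `-x`.

Formally the half-line identity is Fubini followed by
`∫₀^∞ ω^(s-1) e^{-zω} dω = Γ(s) z^(-s)` at `z = i(τ - x)`, where the integral is not absolutely
convergent. So a factor `e^{-εω}` is inserted: for `ε > 0` Fubini applies and `z = ε + i(τ - x)` lies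
in the right half-plane (`fubini_regularized`), where the Gamma integral holds by analytic
continuation from the positive reals (`laplace_cpow`). Then `ε → 0⁺` by dominated convergence
on both sides: on the left the dominating function is `|φ̂(ω)| ω^(re s - 1)`, and on the right
`e^{π |im s|} |φ(τ)| |τ - x|^(-re s)` since `|ε + i(τ - x)| ≥ |τ - x|` (`norm_kernel_le`). Both are a
bounded integrable function times a power `> -1` of a distance, hence integrable
(`integrable_norm_mul_abs_rpow`); the same bounds give the two absolute convergence claims.
-/

open MeasureTheory Complex

open Filter Topology Set

/-! ### The Gamma integral with a complex rate -/

theorem integrableOn_rpow_mul_exp {p c : ℝ} (hp : -1 < p) (hc : 0 < c) :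
    IntegrableOn (fun t : ℝ => t ^ p * Real.exp (-c * t)) (Ioi 0) := by
  simpa using integrableOn_rpow_mul_exp_neg_mul_rpow hp zero_lt_one hc

theorem aesm_laplace (w z : ℂ) :
    AEStronglyMeasurable (fun t : ℝ => (t : ℂ) ^ w * cexp (-(z * t)))
      (volume.restrict (Ioi 0)) := by
  refine ContinuousOn.aestronglyMeasurable (fun t ht => ?_) measurableSet_Ioi
  have ht' : (t : ℂ) ∈ slitPlane := ofReal_mem_slitPlane.2 ht
  exact ((continuousAt_ofReal_cpow_const t w (Or.inr (ne_of_gt ht))).mul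
    (by fun_prop)).continuousWithinAt

theorem norm_laplace (w z : ℂ) {t : ℝ} (ht : 0 < t) :
    ‖(t : ℂ) ^ w * cexp (-(z * t))‖ = t ^ w.re * Real.exp (-z.re * t) := by
  rw [norm_mul, norm_cpow_eq_rpow_re_of_pos ht, norm_exp]
  simp

theorem integrableOn_laplace {w z : ℂ} (hw : -1 < w.re) (hz : 0 < z.re) :
    IntegrableOn (fun t : ℝ => (t : ℂ) ^ w * cexp (-(z * t))) (Ioi 0) := by
  refine (integrableOn_rpow_mul_exp hw hz).mono' (aesm_laplace w z) ?_
  filter_upwards [ae_restrict_mem measurableSet_Ioi] with t ht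
  rw [norm_laplace w z ht]

/-- The Laplace transform of `t ^ (s - 1)` on the right half-plane. Both sides are holomorphic in `z`
and agree for `z > 0`, so the identity theorem applies. -/
theorem laplace_cpow {s z : ℂ} (hs : 0 < s.re) (hz : 0 < z.re) :
    ∫ t : ℝ in Ioi 0, (t : ℂ) ^ (s - 1) * cexp (-(z * t)) = Gamma s * z ^ (-s) := by
  have hw : -1 < (s - 1).re := by simpa using hs
  have hopen : IsOpen {z : ℂ | 0 < z.re} := isOpen_lt continuous_const continuous_re
  have hF : DifferentiableOn ℂ (fun z : ℂ => ∫ t : ℝ in Ioi 0, (t : ℂ) ^ (s - 1) * cexp (-(z * t)))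
      {z : ℂ | 0 < z.re} := by
    intro z₀ hz₀
    -- Near `z₀` the `z`-derivative is dominated using the lower bound `re z > re z₀ / 2`.
    have hz₀' : 0 < z₀.re / 2 := half_pos hz₀
    have hnhds : {z : ℂ | z₀.re / 2 < z.re} ∈ 𝓝 z₀ :=
      (isOpen_lt continuous_const continuous_re).mem_nhds (half_lt_self (α := ℝ) hz₀)
    refine (hasDerivAt_integral_of_dominated_loc_of_deriv_le
      (F' := fun z t => (t : ℂ) ^ (s - 1) * (cexp (-(z * t)) * (-t)))
      (bound := fun t : ℝ => t ^ s.re * Real.exp (-(z₀.re / 2) * t)) hnhds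
      (Eventually.of_forall fun z => aesm_laplace _ z) (integrableOn_laplace hw hz₀)
      ?_ ?_ (integrableOn_rpow_mul_exp (by linarith) hz₀') ?_).2.differentiableAt.differentiableWithinAt
    · have := (aesm_laplace (s - 1) z₀).mul
        (show Continuous fun t : ℝ => (-t : ℂ) by fun_prop).aestronglyMeasurable
      refine this.congr (Eventually.of_forall fun t => ?_)
      simp [mul_assoc]
    · filter_upwards [ae_restrict_mem measurableSet_Ioi] with t (ht : 0 < t) z (hz : _ < _)
      rw [← mul_assoc, norm_mul, norm_laplace _ _ ht, norm_neg, norm_real, Real.norm_of_nonneg ht.le,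
        mul_right_comm, sub_re, one_re, Real.rpow_sub_one ht.ne', div_mul_cancel₀ _ ht.ne']
      gcongr
    · refine Eventually.of_forall fun t z _ => ?_
      refine HasDerivAt.const_mul _ (HasDerivAt.cexp ?_)
      exact (hasDerivAt_mul_const (t : ℂ)).neg
  have hG : DifferentiableOn ℂ (fun z : ℂ => Gamma s * z ^ (-s)) {z : ℂ | 0 < z.re} := by
    intro z hz
    exact ((differentiableAt_id.cpow_const (Or.inl hz)).const_mul _).differentiableWithinAt
  refine (hF.analyticOnNhd hopen).eqOn_of_preconnected_of_frequently_eq (hG.analyticOnNhd hopen)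
    (convex_halfSpace_re_gt 0).isPreconnected (z₀ := 1) (by simp) ?_ hz
  have ht : Tendsto (fun r : ℝ => (r : ℂ)) (𝓝[≠] 1) (𝓝[≠] 1) := by
    refine tendsto_nhdsWithin_of_tendsto_nhds_of_eventually_within _ ?_ ?_
    · exact ((continuous_ofReal.tendsto' 1 1 (by simp))).mono_left nhdsWithin_le_nhds
    · filter_upwards [self_mem_nhdsWithin] with r hr
      simpa using hr
  refine ht.frequently (Eventually.frequently ?_)
  filter_upwards [nhdsWithin_le_nhds (lt_mem_nhds (zero_lt_one (α := ℝ)))] with r hr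
  rw [integral_cpow_mul_exp_neg_mul_Ioi hs hr, one_div, inv_cpow _ _
    (by rw [arg_ofReal_of_nonneg hr.le]; exact Real.pi_pos.ne), cpow_neg, mul_comm]

/-! ### Bounds on the kernel and on the multiplier -/

/-- A bounded integrable function stays integrable after multiplication by an integrable power
singularity: boundedness is used within distance `1` of `x`, integrability elsewhere. -/
theorem integrable_norm_mul_abs_rpow {f : ℝ → ℂ} {C p : ℝ} (hf : Integrable f)
    (hC : ∀ t, ‖f t‖ ≤ C) (hp : -1 < p) (hp0 : p ≤ 0) (x : ℝ) :
    Integrable (fun t => ‖f t‖ * |t - x| ^ p) := by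
  have h1 : IntegrableOn (fun t : ℝ => |t| ^ p) (Icc (-1) 1) := by
    have h01 : IntervalIntegrable (fun t : ℝ => |t| ^ p) volume 0 1 := by
      refine (intervalIntegral.intervalIntegrable_rpow' (a := 0) (b := 1) hp).congr
        (fun t ht => ?_)
      rw [uIoc_of_le zero_le_one] at ht
      simp [abs_of_pos ht.1]
    have h10 : IntervalIntegrable (fun t : ℝ => |t| ^ p) volume (-1) 0 := by
      simpa using ((IntervalIntegrable.iff_comp_neg (by simp)).1 h01).symm
    rw [← intervalIntegrable_iff_integrableOn_Icc_of_le (by norm_num)]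
    exact h10.trans h01
  have h2 : Integrable (fun t => C * (Icc (-1) 1).indicator (fun t : ℝ => |t| ^ p) (t - x)) :=
    ((h1.integrable_indicator measurableSet_Icc).comp_sub_right x).const_mul C
  refine (h2.add hf.norm).mono' ?_ (Eventually.of_forall fun t => ?_)
  · exact hf.norm.aestronglyMeasurable.mul (by fun_prop : Measurable fun t : ℝ => |t - x| ^ p).aestronglyMeasurable
  · have hC0 : 0 ≤ C := (norm_nonneg _).trans (hC t)
    have hr : 0 ≤ |t - x| ^ p := by positivity
    rw [Real.norm_of_nonneg (by positivity)]
    by_cases ht : t - x ∈ Icc (-1) 1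
    · simp only [Pi.add_apply, indicator_of_mem ht]
      nlinarith [mul_le_mul_of_nonneg_right (hC t) hr, norm_nonneg (f t)]
    · simp only [Pi.add_apply, indicator_of_notMem ht, mul_zero, zero_add]
      refine mul_le_of_le_one_right (norm_nonneg _) (Real.rpow_le_one_of_one_le_of_nonpos ?_ hp0)
      by_contra! h
      exact ht ⟨(abs_lt.1 h).1.le, (abs_lt.1 h).2.le⟩

/-- A bound uniform in `ε`: `‖ε + iu‖ ≥ |u|`, and the argument contributes at most
`exp (π |im s|)`. The point `u = 0` must be excluded, because there the right side is `0`. -/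
theorem norm_kernel_le {s : ℂ} (hs : 0 < s.re) (ε : ℝ) {u : ℝ} (hu : u ≠ 0) :
    ‖((ε : ℂ) + I * u) ^ (-s)‖ ≤ Real.exp (Real.pi * |s.im|) * |u| ^ (-s.re) := by
  set z : ℂ := (ε : ℂ) + I * u with hz
  have him : z.im = u := by simp [hz]
  have h1 : |u| ≤ ‖z‖ := him ▸ abs_im_le_norm z
  have h2 : |u| > 0 := abs_pos.2 hu
  refine (norm_cpow_le z (-s)).trans ?_
  rw [div_eq_mul_inv, ← Real.exp_neg, mul_comm]
  have h3 : -(z.arg * (-s).im) ≤ Real.pi * |s.im| := by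
    refine (le_abs_self _).trans ?_
    rw [abs_neg, abs_mul, neg_im, abs_neg]
    gcongr
    exact abs_arg_le_pi z
  have h4 : ‖z‖ ^ (-s).re ≤ |u| ^ (-s.re) := by
    rw [neg_re]
    exact Real.rpow_le_rpow_of_nonpos h2 h1 (by linarith)
  gcongr

theorem ae_sub_ne_zero (x : ℝ) : ∀ᵐ t : ℝ, t - x ≠ 0 := by
  filter_upwards [Measure.ae_ne volume x] with t ht
  exact sub_ne_zero.2 ht

theorem integrable_kernel {s : ℂ} (hs : 0 < s.re) (hs1 : s.re < 1) {f : ℝ → ℂ} {C : ℝ}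
    (hf : Integrable f) (hC : ∀ t, ‖f t‖ ≤ C) (x ε : ℝ) :
    Integrable (fun τ : ℝ => f τ * ((ε : ℂ) + I * ((τ - x : ℝ) : ℂ)) ^ (-s)) := by
  refine ((integrable_norm_mul_abs_rpow (p := -s.re) hf hC (by linarith) (by linarith) x).const_mul
    (Real.exp (Real.pi * |s.im|))).mono' ?_ ?_
  · refine hf.aestronglyMeasurable.mul (Measurable.aestronglyMeasurable ?_)
    exact Measurable.pow_const (by fun_prop) _
  · filter_upwards [ae_sub_ne_zero x] with τ hτ
    rw [norm_mul, mul_left_comm]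
    gcongr
    exact norm_kernel_le hs ε hτ

theorem norm_FT_le (f : ℝ → ℂ) (ω : ℝ) : ‖FT f ω‖ ≤ ∫ t, ‖f t‖ := by
  refine (norm_integral_le_integral_norm _).trans_eq (integral_congr_ae (Eventually.of_forall ?_))
  intro t
  simp [norm_exp]

theorem aesm_halfLine (s : ℂ) {f : ℝ → ℂ} (hF : Integrable (FT f)) (x ε : ℝ) :
    AEStronglyMeasurable
      (fun ω : ℝ => FT f ω * (ω : ℂ) ^ (s - 1) * cexp (I * ω * x) * cexp (-(ε * ω)))
      (volume.restrict (Ioi 0)) := by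
  have h := aesm_laplace (s - 1) ε
  have hc : Continuous fun ω : ℝ => cexp (I * ω * x) := by fun_prop
  refine ((hF.aestronglyMeasurable.restrict.mul h).mul hc.aestronglyMeasurable).congr
    (Eventually.of_forall fun ω => ?_)
  simp only [Pi.mul_apply]
  ring

theorem norm_halfLine_le (s : ℂ) (f : ℝ → ℂ) (x : ℝ) {ε ω : ℝ} (hε : 0 ≤ ε) (hω : 0 < ω) :
    ‖FT f ω * (ω : ℂ) ^ (s - 1) * cexp (I * ω * x) * cexp (-(ε * ω))‖
      ≤ ‖FT f ω‖ * |ω - 0| ^ (s.re - 1) := by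
  have h1 : ‖cexp (I * ω * x)‖ = 1 := by simp [norm_exp]
  have h2 : ‖cexp (-(ε * ω))‖ ≤ 1 := by
    rw [norm_exp, Real.exp_le_one_iff]
    simpa using mul_nonneg hε hω.le
  rw [norm_mul, norm_mul, norm_mul, h1, mul_one, norm_cpow_eq_rpow_re_of_pos hω, sub_zero,
    abs_of_pos hω, sub_re, one_re]
  exact mul_le_of_le_one_right (by positivity) h2

/-! ### The half-line identity -/

/-- The half-line identity with the damping factor `e^{-εω}`, which makes the double integral
absolutely convergent. -/
theorem fubini_regularized {s : ℂ} (hs : 0 < s.re) {f : ℝ → ℂ}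
    (hf : Integrable f) (x : ℝ) {ε : ℝ} (hε : 0 < ε) :
    ∫ ω : ℝ in Ioi 0, FT f ω * (ω : ℂ) ^ (s - 1) * cexp (I * ω * x) * cexp (-(ε * ω)) =
      Gamma s * ∫ τ : ℝ, f τ * ((ε : ℂ) + I * ((τ - x : ℝ) : ℂ)) ^ (-s) := by
  have hg : IntegrableOn (fun ω : ℝ => (ω : ℂ) ^ (s - 1) * cexp (-(ε * ω))) (Ioi 0) :=
    integrableOn_laplace (w := s - 1) (z := ε) (by simpa using hs) (by simpa using hε)
  have hprod : Integrable (Function.uncurry fun (ω τ : ℝ) =>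
      f τ * ((ω : ℂ) ^ (s - 1) * cexp (-(((ε : ℂ) + I * ((τ - x : ℝ) : ℂ)) * ω))))
      ((volume.restrict (Ioi 0)).prod volume) := by
    have h := hg.integrable.mul_prod hf
    have hph : Continuous fun q : ℝ × ℝ => cexp (-(I * ((q.2 - x : ℝ) : ℂ) * q.1)) := by fun_prop
    refine (h.mul_bdd (c := 1) hph.aestronglyMeasurable (Eventually.of_forall fun q => ?_)).congr
      (Eventually.of_forall fun q => ?_)
    · simp [norm_exp]
    · simp only [Function.uncurry]
      rw [show -(((ε : ℂ) + I * ((q.2 - x : ℝ) : ℂ)) * q.1)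
        = -(ε * q.1) + -(I * ((q.2 - x : ℝ) : ℂ) * q.1) by ring, exp_add]
      ring
  calc _ = ∫ ω : ℝ in Ioi 0, ∫ τ : ℝ,
        f τ * ((ω : ℂ) ^ (s - 1) * cexp (-(((ε : ℂ) + I * ((τ - x : ℝ) : ℂ)) * ω))) := by
        refine integral_congr_ae (Eventually.of_forall fun ω => ?_)
        simp only [FT, ← integral_mul_const]
        refine integral_congr_ae (Eventually.of_forall fun τ => ?_)
        simp only
        rw [show -(((ε : ℂ) + I * ((τ - x : ℝ) : ℂ)) * ω)
          = -(I * ω * τ) + I * ω * x + -(ε * ω) by push_cast; ring, exp_add, exp_add]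
        ring
    _ = ∫ τ : ℝ, ∫ ω : ℝ in Ioi 0,
        f τ * ((ω : ℂ) ^ (s - 1) * cexp (-(((ε : ℂ) + I * ((τ - x : ℝ) : ℂ)) * ω))) :=
        integral_integral_swap hprod
    _ = _ := by
        rw [← integral_const_mul]
        refine integral_congr_ae (Eventually.of_forall fun τ => ?_)
        simp only
        rw [integral_const_mul, laplace_cpow hs (by simpa using hε)]
        ring

/-- The half-line identity, by letting `ε → 0⁺` in `fubini_regularized`, together with the absolute
convergence of both sides. -/
theorem halfLine {s : ℂ} (hs : 0 < s.re) (hs1 : s.re < 1) {f : ℝ → ℂ} {C : ℝ}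
    (hf : Integrable f) (hC : ∀ t, ‖f t‖ ≤ C) (hF : Integrable (FT f)) (x : ℝ) :
    IntegrableOn (fun ω : ℝ => FT f ω * (ω : ℂ) ^ (s - 1) * cexp (I * ω * x)) (Ioi 0) ∧
    Integrable (fun τ : ℝ => f τ * (I * ((τ : ℂ) - x)) ^ (-s)) ∧
    ∫ ω : ℝ in Ioi 0, FT f ω * (ω : ℂ) ^ (s - 1) * cexp (I * ω * x) =
      Gamma s * ∫ τ : ℝ, f τ * (I * ((τ : ℂ) - x)) ^ (-s) := by
  have hdom := (integrable_norm_mul_abs_rpow (p := s.re - 1) hF (norm_FT_le f) (by linarith)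
    (by linarith) 0).integrableOn (s := Ioi 0)
  have hker := integrable_norm_mul_abs_rpow (p := -s.re) hf hC (by linarith) (by linarith) x
  have h1 : IntegrableOn (fun ω : ℝ => FT f ω * (ω : ℂ) ^ (s - 1) * cexp (I * ω * x)) (Ioi 0) := by
    have h := Integrable.mono' hdom (aesm_halfLine s hF x 0)
      ((ae_restrict_mem measurableSet_Ioi).mono fun ω hω => norm_halfLine_le s f x le_rfl hω)
    simpa only [IntegrableOn, ofReal_zero, zero_mul, neg_zero, exp_zero, mul_one] using h
  have h2 := integrable_kernel hs hs1 hf hC x 0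
  refine ⟨h1, by simpa using h2, ?_⟩
  have hpos : ∀ᶠ ε : ℝ in 𝓝[>] 0, 0 < ε := self_mem_nhdsWithin
  have hL : Tendsto (fun ε : ℝ => ∫ ω : ℝ in Ioi 0,
      FT f ω * (ω : ℂ) ^ (s - 1) * cexp (I * ω * x) * cexp (-(ε * ω))) (𝓝[>] 0)
      (𝓝 (∫ ω : ℝ in Ioi 0, FT f ω * (ω : ℂ) ^ (s - 1) * cexp (I * ω * x))) := by
    refine tendsto_integral_filter_of_dominated_convergence _
      (Eventually.of_forall fun ε => aesm_halfLine s hF x ε)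
      (hpos.mono fun ε hε => (ae_restrict_mem measurableSet_Ioi).mono
        fun ω hω => norm_halfLine_le s f x hε.le hω) hdom (Eventually.of_forall fun ω => ?_)
    have : Continuous fun ε : ℝ =>
      FT f ω * (ω : ℂ) ^ (s - 1) * cexp (I * ω * x) * cexp (-(ε * ω)) := by fun_prop
    exact (this.tendsto' 0 _ (by simp)).mono_left nhdsWithin_le_nhds
  have hR : Tendsto (fun ε : ℝ => ∫ τ : ℝ, f τ * ((ε : ℂ) + I * ((τ - x : ℝ) : ℂ)) ^ (-s)) (𝓝[>] 0)
      (𝓝 (∫ τ : ℝ, f τ * (I * ((τ : ℂ) - x)) ^ (-s))) := by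
    refine tendsto_integral_filter_of_dominated_convergence _
      (Eventually.of_forall fun ε => (integrable_kernel hs hs1 hf hC x ε).aestronglyMeasurable)
      (Eventually.of_forall fun ε => ?_) (hker.const_mul (Real.exp (Real.pi * |s.im|))) ?_
    · filter_upwards [ae_sub_ne_zero x] with τ hτ
      rw [norm_mul, mul_left_comm]
      gcongr
      exact norm_kernel_le hs ε hτ
    · filter_upwards [ae_sub_ne_zero x] with τ hτ
      have hc : ContinuousAt (fun ε : ℝ => f τ * ((ε : ℂ) + I * ((τ - x : ℝ) : ℂ)) ^ (-s)) 0 := by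
        -- `i(τ - x)` has nonzero imaginary part, so it is off the branch cut.
        refine continuousAt_const.mul (ContinuousAt.cpow (by fun_prop) continuousAt_const ?_)
        exact Or.inr (by simpa using hτ)
      have := hc.tendsto.mono_left (nhdsWithin_le_nhds (s := Ioi 0))
      simpa using this
  refine tendsto_nhds_unique hL ((hR.const_mul (Gamma s)).congr' ?_)
  filter_upwards [hpos] with ε hε
  exact (fubini_regularized hs hf x hε).symm

/-! ### The Fourier transform of a Schwartz function and the two half-lines -/

open FourierTransform in
/-- `FT φ` is Mathlib's Fourier transform, a Schwartz function, evaluated at `ω / (2π)`. -/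
theorem integrable_FT (φ : SchwartzMap ℝ ℂ) : Integrable (FT ⇑φ) := by
  have h := (𝓕 φ).integrable (μ := volume)
  refine (h.comp_div (R := 2 * Real.pi) (by positivity)).congr (Eventually.of_forall fun ω => ?_)
  simp only [FT, SchwartzMap.fourier_coe, Real.fourier_real_eq_integral_exp_smul, smul_eq_mul]
  refine integral_congr_ae (Eventually.of_forall fun t => ?_)
  simp only
  rw [mul_comm]
  congr 2
  push_cast
  field_simp

theorem FT_comp_neg (f : ℝ → ℂ) (ω : ℝ) : FT (fun t => f (-t)) ω = FT f (-ω) := by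
  simp only [FT]
  rw [← integral_neg_eq_self]
  simp

/-- kernel representation of the complex-order derivative `D_{a,b}^γ`
for `-1 < Re γ < 0`. -/
theorem statement17 (a b γ : ℂ) (ha : a ≠ 0) (hb : b ≠ 0)
    (hγ₁ : -1 < γ.re) (hγ₂ : γ.re < 0) (φ : SchwartzMap ℝ ℂ) (x : ℝ) :
    Integrable (fun ω : ℝ =>
      FT ⇑φ ω * hab a b γ ω * Complex.exp (Complex.I * (ω : ℂ) * (x : ℂ))) ∧
    Integrable (fun τ : ℝ => φ τ *
      (a * (Complex.I * ((τ : ℂ) - (x : ℂ))) ^ (-(γ + 1)) +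
       b * (Complex.I * ((x : ℂ) - (τ : ℂ))) ^ (-(γ + 1)))) ∧
    Dop a b γ ⇑φ x = Complex.Gamma (γ + 1) / (2 * (Real.pi : ℂ)) *
      ∫ τ : ℝ, φ τ *
        (a * (Complex.I * ((τ : ℂ) - (x : ℂ))) ^ (-(γ + 1)) +
         b * (Complex.I * ((x : ℂ) - (τ : ℂ))) ^ (-(γ + 1))) := by
  have hs : 0 < (γ + 1).re := by simp; linarith
  have hs1 : (γ + 1).re < 1 := by simpa using hγ₂
  have hφ : Integrable ⇑φ := φ.integrable
  have hFφ := integrable_FT φ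
  obtain ⟨C, hC⟩ : ∃ C, ∀ t, ‖φ t‖ ≤ C :=
    ⟨_, fun t => φ.toBoundedContinuousFunction.norm_coe_le_norm t⟩
  obtain ⟨hp1, hp2, hp3⟩ := halfLine hs hs1 hφ hC hFφ x
  -- The negative half-line, through the reflected function at `-x`.
  obtain ⟨hn1, hn2, hn3⟩ := halfLine hs hs1 (f := fun t => φ (-t)) hφ.comp_neg (fun t => hC (-t))
    (by simpa only [funext (FT_comp_neg φ)] using hFφ.comp_neg) (-x)
  simp only [FT_comp_neg, add_sub_cancel_right] at hp1 hp3 hn1 hn3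
  have hker : ∀ τ : ℝ, φ (-τ) * (I * ((τ : ℂ) - ((-x : ℝ) : ℂ))) ^ (-(γ + 1))
      = (fun τ : ℝ => φ τ * (I * ((x : ℂ) - τ)) ^ (-(γ + 1))) (-τ) := by
    intro τ
    simp only [ofReal_neg, sub_neg_eq_add]
    rw [add_comm]
  simp only [hker] at hn2 hn3
  replace hn2 := hn2.comp_neg
  simp only [neg_neg] at hn2
  rw [integral_neg_eq_self (fun τ : ℝ => φ τ * (I * ((x : ℂ) - τ)) ^ (-(γ + 1)))] at hn3
  set G : ℝ → ℂ := fun ω => FT ⇑φ ω * hab a b γ ω * cexp (I * ω * x) with hG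
  have hGp : ∀ ω ∈ Ioi (0 : ℝ), a * (FT φ ω * (ω : ℂ) ^ γ * cexp (I * ω * x)) = G ω := by
    intro ω hω
    simp only [hG, hab, if_pos (mem_Ioi.1 hω)]
    ring
  have hGn : ∀ ω ∈ Ioi (0 : ℝ),
      b * (FT φ (-ω) * (ω : ℂ) ^ γ * cexp (I * ω * ((-x : ℝ) : ℂ))) = G (-ω) := by
    intro ω hω
    have h0 : 0 < ω := hω
    simp only [hG, hab, if_neg (show ¬ 0 < -ω by linarith), if_pos (show -ω < 0 by linarith),
      neg_neg, ofReal_neg, mul_neg, neg_mul]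
    ring
  have hIp : IntegrableOn G (Ioi 0) :=
    IntegrableOn.congr_fun (hp1.const_mul a) hGp measurableSet_Ioi
  have hIn' : IntegrableOn (fun ω => G (-ω)) (Ioi 0) :=
    IntegrableOn.congr_fun (hn1.const_mul b) hGn measurableSet_Ioi
  have hIn : IntegrableOn G (Iic 0) := by
    rw [integrableOn_Iic_iff_integrableOn_Iio]
    rw [← neg_zero] at hIn'
    simpa using hIn'.comp_neg_Iio
  have hI : Integrable G := by
    rw [← integrableOn_univ, ← Iic_union_Ioi (a := (0 : ℝ))]
    exact hIn.union hIp
  have hsplit : ∀ τ : ℝ, φ τ * (a * (I * ((τ : ℂ) - x)) ^ (-(γ + 1)) +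
      b * (I * ((x : ℂ) - τ)) ^ (-(γ + 1))) = a * (φ τ * (I * ((τ : ℂ) - x)) ^ (-(γ + 1))) +
      b * (φ τ * (I * ((x : ℂ) - τ)) ^ (-(γ + 1))) := fun τ => by ring
  simp only [hsplit]
  refine ⟨hI, (hp2.const_mul a).add (hn2.const_mul b), ?_⟩
  have hint : ∫ ω, G ω = a * (Gamma (γ + 1) * ∫ τ : ℝ, φ τ * (I * ((τ : ℂ) - x)) ^ (-(γ + 1)))
      + b * (Gamma (γ + 1) * ∫ τ : ℝ, φ τ * (I * ((x : ℂ) - τ)) ^ (-(γ + 1))) := by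
    rw [← intervalIntegral.integral_Iic_add_Ioi hIn hIp, ← hp3, ← hn3, ← integral_const_mul,
      ← integral_const_mul, setIntegral_congr_fun measurableSet_Ioi hGp,
      setIntegral_congr_fun measurableSet_Ioi hGn, integral_comp_neg_Ioi, neg_zero, add_comm]
  rw [Dop, hint, integral_add (hp2.const_mul a) (hn2.const_mul b), integral_const_mul,
    integral_const_mul]
  ring
end

section
/- Let β ∈ ℂ with Re(β) < −1 and β ∉ ℤ, and let x ∈ ℝ \ {0}. Then ∫_1^∞ ω^β e^{iωx} dω = Γ(β+1)·(−ix)^{−(β+1)} − Σ_{m=0}^∞ (−1)^m (−ix)^m / (m!·(β+1+m)), where the integral converges absolutely, the series converges absolutely, ω^β = exp(β·log ω) for ω > 0, and (−ix)^{−(β+1)} is the principal branch of the complex power. -/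
/-!
Write `E(s, z) = ∫_1^∞ t^(s-1) e^(-zt) dt`, which converges absolutely if `Re z > 0`, or if
`Re z ≥ 0` and `Re s < 0`; and
`S(s, z) = ∑ (-z)^m / (m! (s + m))`. The formula is `E(s, z) = Γ(s) z^(-s) - S(s, z)`
at `s = β + 1`, `z = -ix`.

* If `Re s > 0` and `Re z > 0`, then `∫_0^∞ t^(s-1) e^(-zt) dt = Γ(s) z^(-s)`
  (`integral_kernel_zero`, from real `z` by the identity theorem), while the part over `(0, 1]` is
  `S(s, z)` by termwise integration (`integral_kernel_Ioc`).
* Integration by parts gives `z E(s+1, z) = e^(-z) + s E(s, z)` (`upper_succ`), and a shift of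
  index gives `z S(s+1, z) = s S(s, z) - e^(-z)` (`lowerSeries_succ`). With `Γ(s+1) = s Γ(s)` the
  formula descends from `s + 1` to `s`, hence holds for all `s` that are not nonpositive integers
  (`upper_eq`).
* For `Re s < 0` the integral is dominated by `t^(Re s - 1)` uniformly in `Re z ≥ 0`, and `-ix` lies
  off the branch cut of the principal power, so both sides are continuous along `-ix + ε`, `ε → 0+`.
-/

open MeasureTheory Complex

open Filter Topology

/-! ### The lower incomplete Gamma series -/

/-- The power series `∑ (-z)^m / (m! (s + m))` of the lower incomplete Gamma function
`∫_0^1 ω^(s-1) e^(-zω) dω`, which continues it in `s` off the nonpositive integers. -/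
noncomputable def lowerSeries (s z : ℂ) : ℂ :=
  ∑' m : ℕ, (-1 : ℂ) ^ m * z ^ m / ((m.factorial : ℂ) * (s + m))

lemma summable_norm_lowerSeries (s z : ℂ) :
    Summable (fun m : ℕ => ‖(-1 : ℂ) ^ m * z ^ m / ((m.factorial : ℂ) * (s + m))‖) := by
  refine Summable.of_norm_bounded_eventually_nat (Real.summable_pow_div_factorial ‖z‖) ?_
  obtain ⟨N, hN⟩ := exists_nat_ge (‖s‖ + 1)
  filter_upwards [eventually_ge_atTop N] with m hm
  have h1 : 1 ≤ ‖s + m‖ := by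
    have h2 : ‖(m : ℂ)‖ ≤ ‖s + m‖ + ‖s‖ := by
      simpa using norm_sub_le (s + m) s
    have h3 : (N : ℝ) ≤ m := by exact_mod_cast hm
    rw [Complex.norm_natCast] at h2
    linarith
  have hf : (0 : ℝ) < m.factorial := by exact_mod_cast m.factorial_pos
  rw [norm_norm, norm_div, norm_mul, norm_mul, norm_pow, norm_pow, norm_neg, norm_one, one_pow,
    one_mul, Complex.norm_natCast]
  gcongr
  nlinarith

lemma summable_lowerSeries (s z : ℂ) :
    Summable (fun m : ℕ => (-1 : ℂ) ^ m * z ^ m / ((m.factorial : ℂ) * (s + m))) :=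
  (summable_norm_lowerSeries s z).of_norm

lemma hasSum_exp_neg (z : ℂ) :
    HasSum (fun m : ℕ => (-1 : ℂ) ^ m * z ^ m / (m.factorial : ℂ)) (cexp (-z)) := by
  have := NormedSpace.expSeries_div_hasSum_exp (-z)
  rw [← Complex.exp_eq_exp_ℂ] at this
  simpa [neg_pow z] using this

/-- The contiguous relation in `s`, matching integration by parts for the lower incomplete Gamma
integral. -/
lemma lowerSeries_succ {s : ℂ} (hs : ∀ m : ℕ, s + m ≠ 0) (z : ℂ) :
    z * lowerSeries (s + 1) z = s * lowerSeries s z - cexp (-z) := by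
  have h1 := ((summable_lowerSeries s z).hasSum.mul_left s).sub (hasSum_exp_neg z)
  have h2 := (summable_lowerSeries (s + 1) z).hasSum.mul_left z
  -- The `m = 0` term of the right-hand side vanishes; the others are a shift of the left-hand side.
  rw [← hasSum_nat_add_iff' 1] at h1
  have h0 := hs 0
  simp only [Nat.cast_zero, add_zero] at h0
  have hterm : ∀ m : ℕ, z * ((-1 : ℂ) ^ m * z ^ m / ((m.factorial : ℂ) * (s + 1 + m))) =
      s * ((-1 : ℂ) ^ (m + 1) * z ^ (m + 1) /
          (((m + 1).factorial : ℂ) * (s + ((m + 1 : ℕ) : ℂ)))) -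
        (-1 : ℂ) ^ (m + 1) * z ^ (m + 1) / ((m + 1).factorial : ℂ) := by
    intro m
    have h3 := hs (m + 1)
    have hf : (m.factorial : ℂ) ≠ 0 := by exact_mod_cast m.factorial_ne_zero
    have hm : (m : ℂ) + 1 ≠ 0 := by exact_mod_cast m.succ_ne_zero
    have h4 : s + 1 + (m : ℂ) ≠ 0 := by
      intro h; apply h3; push_cast; rw [← h]; ring
    have h5 : s + ((m : ℂ) + 1) ≠ 0 := by
      intro h; apply h4; rw [← h]; ring
    rw [Nat.factorial_succ]
    push_cast
    field_simp
    ring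
  have h6 := h2.unique (by simpa only [hterm] using h1)
  simpa [lowerSeries, h0] using h6

lemma continuous_lowerSeries (s : ℂ) : Continuous (lowerSeries s) := by
  refine continuous_iff_continuousAt.2 fun z => ?_
  refine tendsto_tsum_of_dominated_convergence
    (summable_norm_lowerSeries s ((‖z‖ + 1 : ℝ) : ℂ)) (fun m => ?_) ?_
  · exact Continuous.tendsto (by fun_prop) z
  · filter_upwards [Metric.ball_mem_nhds z one_pos] with w hw m
    have hw' : ‖w‖ ≤ ‖z‖ + 1 := by
      have h1 := norm_add_le z (w - z)
      rw [Metric.mem_ball, dist_eq_norm] at hw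
      rw [add_sub_cancel] at h1
      linarith
    have h0 : 0 ≤ ‖z‖ + 1 := by positivity
    simp only [norm_div, norm_mul, norm_pow, Complex.norm_real, Real.norm_of_nonneg h0]
    gcongr

/-! ### The kernel `t ^ s * exp (-z t)` and integration by parts -/

lemma norm_kernel (s z : ℂ) {t : ℝ} (ht : 0 < t) :
    ‖(t : ℂ) ^ s * cexp (-(z * t))‖ = t ^ s.re * Real.exp (-z.re * t) := by
  rw [norm_mul, norm_cpow_eq_rpow_re_of_pos ht, Complex.norm_exp]
  simp

lemma continuousOn_kernel (s z : ℂ) :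
    ContinuousOn (fun t : ℝ => (t : ℂ) ^ s * cexp (-(z * t))) (Set.Ioi 0) := by
  intro t ht
  refine ContinuousAt.continuousWithinAt ?_
  exact (continuousAt_ofReal_cpow_const t s (Or.inr ht.ne')).mul
    (Continuous.continuousAt (by fun_prop))

lemma integrableOn_kernel_zero {s z : ℂ} (hs : -1 < s.re) (hz : 0 < z.re) :
    IntegrableOn (fun t : ℝ => (t : ℂ) ^ s * cexp (-(z * t))) (Set.Ioi 0) := by
  have h := integrableOn_rpow_mul_exp_neg_mul_rpow hs one_pos hz
  refine Integrable.mono' h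
    ((continuousOn_kernel s z).aestronglyMeasurable measurableSet_Ioi) ?_
  filter_upwards [ae_restrict_mem measurableSet_Ioi] with t ht
  rw [norm_kernel s z ht, Real.rpow_one]

lemma integrableOn_kernel_one (s : ℂ) {z : ℂ} (hz : 0 < z.re) :
    IntegrableOn (fun t : ℝ => (t : ℂ) ^ s * cexp (-(z * t))) (Set.Ioi 1) := by
  have hm : 0 ≤ max s.re 0 := le_max_right _ _
  have h := (integrableOn_rpow_mul_exp_neg_mul_rpow (s := max s.re 0) (by linarith)
    one_pos hz).mono_set (Set.Ioi_subset_Ioi zero_le_one)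
  refine Integrable.mono' h (((continuousOn_kernel s z).mono
    (Set.Ioi_subset_Ioi zero_le_one)).aestronglyMeasurable measurableSet_Ioi) ?_
  filter_upwards [ae_restrict_mem measurableSet_Ioi] with t ht
  have ht1 : 1 < t := ht
  rw [norm_kernel s z (by linarith), Real.rpow_one]
  gcongr
  · exact ht1.le
  · exact le_max_left _ _

/-- Integration by parts for the upper incomplete Gamma integral. -/
lemma upper_succ {s z : ℂ} (hs : s ≠ 0) (hz : 0 < z.re) :
    z * ∫ t : ℝ in Set.Ioi 1, (t : ℂ) ^ s * cexp (-(z * t)) =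
      cexp (-z) + s * ∫ t : ℝ in Set.Ioi 1, (t : ℂ) ^ (s - 1) * cexp (-(z * t)) := by
  have hi1 := (integrableOn_kernel_one (s - 1) hz).const_mul s
  have hi2 := (integrableOn_kernel_one s hz).const_mul z
  have hd : ∀ t ∈ Set.Ici (1 : ℝ), HasDerivAt (fun t : ℝ => (t : ℂ) ^ s * cexp (-(z * t)))
      (s * ((t : ℂ) ^ (s - 1) * cexp (-(z * t))) - z * ((t : ℂ) ^ s * cexp (-(z * t)))) t := by
    intro t ht
    have ht0 : t ≠ 0 := by have : (1 : ℝ) ≤ t := ht; linarith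
    have h1 := hasDerivAt_ofReal_cpow_const ht0 hs
    have h2 : HasDerivAt (fun t : ℝ => cexp (-(z * t))) (cexp (-(z * t)) * (-(z * 1))) t :=
      (((Complex.ofRealCLM.hasDerivAt (x := t)).const_mul z).neg).cexp
    exact (h1.fun_mul h2).congr_deriv (by ring)
  have hlim : Tendsto (fun t : ℝ => (t : ℂ) ^ s * cexp (-(z * t))) atTop (𝓝 0) := by
    rw [tendsto_zero_iff_norm_tendsto_zero]
    refine (tendsto_rpow_mul_exp_neg_mul_atTop_nhds_zero s.re z.re hz).congr' ?_
    filter_upwards [eventually_gt_atTop 0] with t ht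
    rw [norm_kernel s z ht]
  have h := integral_Ioi_of_hasDerivAt_of_tendsto' hd (hi1.sub hi2) hlim
  rw [integral_sub hi1 hi2, integral_const_mul, integral_const_mul] at h
  simp only [ofReal_one, one_cpow, mul_one, one_mul] at h
  linear_combination -h

/-! ### The formula for `Re s > 0` -/

/-- The Gamma integral with a complex rate `z`: both sides are holomorphic in the right half-plane
and agree for real `z`. -/
lemma integral_kernel_zero {s : ℂ} (hs : 0 < s.re) {z : ℂ} (hz : 0 < z.re) :
    ∫ t : ℝ in Set.Ioi 0, (t : ℂ) ^ (s - 1) * cexp (-(z * t)) = Gamma s * z ^ (-s) := by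
  have hU : IsOpen {z : ℂ | 0 < z.re} := isOpen_lt continuous_const continuous_re
  have hre : -1 < (s - 1).re := by simp [hs]
  have hF : DifferentiableOn ℂ
      (fun z : ℂ => ∫ t : ℝ in Set.Ioi 0, (t : ℂ) ^ (s - 1) * cexp (-(z * t)))
      {z : ℂ | 0 < z.re} := by
    intro w hw
    have hw' : 0 < w.re := hw
    have hV : {z : ℂ | w.re / 2 < z.re} ∈ 𝓝 w :=
      (isOpen_lt continuous_const continuous_re).mem_nhds (by simpa using hw')
    have hmeas : ∀ z : ℂ, AEStronglyMeasurable
        (fun t : ℝ => (t : ℂ) ^ (s - 1) * cexp (-(z * t))) (volume.restrict (Set.Ioi 0)) :=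
      fun z => (continuousOn_kernel _ z).aestronglyMeasurable measurableSet_Ioi
    have hb := integrableOn_rpow_mul_exp_neg_mul_rpow (s := s.re) (b := w.re / 2) (by linarith)
      one_pos (by linarith)
    refine DifferentiableAt.differentiableWithinAt (HasDerivAt.differentiableAt
      (hasDerivAt_integral_of_dominated_loc_of_deriv_le
        (F' := fun z (t : ℝ) => (t : ℂ) ^ (s - 1) * cexp (-(z * t)) * (-t)) hV
        (Eventually.of_forall hmeas)
        (integrableOn_kernel_zero hre hw') ?_ ?_ hb ?_).2)
    · exact (hmeas w).mul (Continuous.aestronglyMeasurable (by fun_prop))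
    · filter_upwards [ae_restrict_mem measurableSet_Ioi] with t ht v hv
      have ht0 : 0 < t := ht
      have hv' : w.re / 2 < v.re := hv
      rw [norm_mul, norm_kernel _ _ ht0, norm_neg, Complex.norm_real, Real.norm_of_nonneg ht0.le,
        mul_right_comm, ← Real.rpow_add_one ht0.ne', Real.rpow_one, Complex.sub_re, Complex.one_re,
        sub_add_cancel]
      gcongr
    · filter_upwards with t v _
      have h2 : HasDerivAt (fun v : ℂ => cexp (-(v * t))) (cexp (-(v * t)) * (-(1 * t))) v :=
        (((hasDerivAt_id v).mul_const (t : ℂ)).neg).cexp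
      exact (h2.const_mul ((t : ℂ) ^ (s - 1))).congr_deriv (by ring)
  have hG : DifferentiableOn ℂ (fun z : ℂ => Gamma s * z ^ (-s)) {z : ℂ | 0 < z.re} := by
    intro w hw
    exact ((differentiableAt_id.cpow_const (Or.inl hw)).const_mul _).differentiableWithinAt
  refine (hF.analyticOnNhd hU).eqOn_of_preconnected_of_frequently_eq (hG.analyticOnNhd hU)
    (convex_halfSpace_re_gt 0).isPreconnected (z₀ := 1) (by simp) ?_ hz
  have hreal : ∀ r : ℝ, 0 < r →
      ∫ t : ℝ in Set.Ioi 0, (t : ℂ) ^ (s - 1) * cexp (-((r : ℂ) * t)) =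
        Gamma s * (r : ℂ) ^ (-s) := by
    intro r hr
    rw [integral_cpow_mul_exp_neg_mul_Ioi hs hr, one_div, inv_cpow, cpow_neg, mul_comm]
    rw [arg_ofReal_of_nonneg hr.le]
    exact Real.pi_pos.ne
  have htend : Tendsto (fun r : ℝ => (r : ℂ)) (𝓝[≠] 1) (𝓝[≠] 1) := by
    refine tendsto_nhdsWithin_iff.2 ⟨?_, ?_⟩
    · exact (Continuous.tendsto' (by fun_prop) 1 1 (by simp)).mono_left nhdsWithin_le_nhds
    · filter_upwards [self_mem_nhdsWithin] with r hr
      simpa using hr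
  refine htend.frequently (Eventually.frequently ?_)
  filter_upwards [nhdsWithin_le_nhds (lt_mem_nhds one_pos)] with r hr
  exact hreal r hr

/-- Termwise integration of the exponential series against `t ^ (s - 1)` on `(0, 1]`. -/
lemma integral_kernel_Ioc {s : ℂ} (hs : 0 < s.re) (z : ℂ) :
    ∫ t : ℝ in Set.Ioc 0 1, (t : ℂ) ^ (s - 1) * cexp (-(z * t)) = lowerSeries s z := by
  have hsum := Real.summable_pow_div_factorial ‖z‖
  have key := hasSum_integral_of_dominated_convergence (μ := volume.restrict (Set.Ioc (0 : ℝ) 1))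
    (F := fun (m : ℕ) (t : ℝ) =>
      (t : ℂ) ^ (s - 1) * ((-1 : ℂ) ^ m * (z * t) ^ m / (m.factorial : ℂ)))
    (f := fun t : ℝ => (t : ℂ) ^ (s - 1) * cexp (-(z * t)))
    (fun (m : ℕ) (t : ℝ) => t ^ (s.re - 1) * (‖z‖ ^ m / (m.factorial : ℝ))) ?_ ?_ ?_ ?_ ?_
  · rw [← key.tsum_eq, lowerSeries]
    refine tsum_congr fun m => ?_
    have hre : 0 < (s + m).re := by simp; positivity
    have h0 : s + m ≠ 0 := by
      intro h; rw [h] at hre; simp at hre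
    have h1 : ∫ t : ℝ in Set.Ioc 0 1, (t : ℂ) ^ (s + m - 1) = 1 / (s + m) := by
      rw [← intervalIntegral.integral_of_le zero_le_one, integral_cpow]
      · simp [h0]
      · left
        rw [sub_re, one_re]
        linarith
    have h2 : ∫ t : ℝ in Set.Ioc 0 1,
        (t : ℂ) ^ (s - 1) * ((-1 : ℂ) ^ m * (z * t) ^ m / (m.factorial : ℂ)) =
        ∫ t : ℝ in Set.Ioc 0 1,
          ((-1 : ℂ) ^ m * z ^ m / (m.factorial : ℂ)) * (t : ℂ) ^ (s + m - 1) := by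
      refine setIntegral_congr_fun measurableSet_Ioc fun t ht => ?_
      have ht0 : (t : ℂ) ≠ 0 := by exact_mod_cast ht.1.ne'
      have : s + m - 1 = (s - 1) + m := by ring
      simp only [this, cpow_add _ _ ht0, cpow_natCast]
      ring
    rw [h2, integral_const_mul, h1]
    field_simp
  · intro m
    refine ContinuousOn.aestronglyMeasurable (fun t ht => ?_) measurableSet_Ioc
    exact ((continuousAt_ofReal_cpow_const t _ (Or.inr ht.1.ne')).mul
      (Continuous.continuousAt (by fun_prop))).continuousWithinAt
  · intro m
    filter_upwards [ae_restrict_mem measurableSet_Ioc] with t ht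
    rw [norm_mul, norm_cpow_eq_rpow_re_of_pos ht.1]
    simp only [norm_div, norm_mul, norm_pow, norm_neg, norm_one, one_pow, one_mul,
      Complex.norm_natCast, Complex.norm_real, sub_re, one_re, Real.norm_of_nonneg ht.1.le]
    have := ht.1
    gcongr
    exact mul_le_of_le_one_right (norm_nonneg _) ht.2
  · exact Eventually.of_forall fun t => hsum.mul_left _
  · simp_rw [tsum_mul_left]
    refine Integrable.mul_const ?_ _
    have := intervalIntegral.intervalIntegrable_rpow' (a := 0) (b := 1) (r := s.re - 1)
      (by linarith)
    rwa [intervalIntegrable_iff_integrableOn_Ioc_of_le zero_le_one] at this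
  · exact Eventually.of_forall fun t => (hasSum_exp_neg _).mul_left _

lemma upper_eq_of_re_pos {s : ℂ} (hs : 0 < s.re) {z : ℂ} (hz : 0 < z.re) :
    ∫ t : ℝ in Set.Ioi 1, (t : ℂ) ^ (s - 1) * cexp (-(z * t)) =
      Gamma s * z ^ (-s) - lowerSeries s z := by
  have hre : -1 < (s - 1).re := by simp [hs]
  have hi := integrableOn_kernel_zero hre hz
  rw [← integral_kernel_zero hs hz, ← integral_kernel_Ioc hs z,
    ← Set.Ioc_union_Ioi_eq_Ioi (zero_le_one (α := ℝ)),
    setIntegral_union (Set.Ioc_disjoint_Ioi le_rfl) measurableSet_Ioi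
      (hi.mono_set Set.Ioc_subset_Ioi_self) (hi.mono_set (Set.Ioi_subset_Ioi zero_le_one))]
  ring

/-! ### Descent in `s` and the boundary `Re z = 0` -/

/-- The formula in the right half-plane for every admissible `s`, by descending from `s + n` with
positive real part. -/
lemma upper_eq {z : ℂ} (hz : 0 < z.re) (n : ℕ) : ∀ s : ℂ, (∀ m : ℕ, s + m ≠ 0) →
    0 < s.re + n →
    ∫ t : ℝ in Set.Ioi 1, (t : ℂ) ^ (s - 1) * cexp (-(z * t)) =
      Gamma s * z ^ (-s) - lowerSeries s z := by
  have hz0 : z ≠ 0 := by rintro rfl; simp at hz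
  induction n with
  | zero => exact fun s _ h => upper_eq_of_re_pos (by simpa using h) hz
  | succ n ih =>
    intro s hs hn
    have hs0 : s ≠ 0 := by simpa using hs 0
    have h1 := ih (s + 1) (fun m hm => hs (m + 1) (by push_cast; rw [← hm]; ring))
      (by push_cast at hn; rw [add_re, one_re]; linarith)
    have h2 := upper_succ hs0 hz
    have h3 := lowerSeries_succ hs z
    rw [add_sub_cancel_right, Gamma_add_one s hs0] at h1
    have h4 : z ^ (-s) = z * z ^ (-(s + 1)) := by
      have : -s = -(s + 1) + 1 := by ring
      rw [this, cpow_add _ _ hz0, cpow_one, mul_comm]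
    apply mul_left_cancel₀ hs0
    rw [h1] at h2
    rw [h4]
    linear_combination -h2 - h3

/-- explicit evaluation of `∫_1^∞ ω^β e^{iωx} dω` via the Gamma function and
an absolutely convergent power series, for `Re β < -1`, `β ∉ ℤ`, `x ≠ 0`. -/
theorem statement18 (β : ℂ) (hβ : β.re < -1) (hβz : ∀ z : ℤ, β ≠ (z : ℂ))
    (x : ℝ) (hx : x ≠ 0) :
    IntegrableOn (fun ω : ℝ => (ω : ℂ) ^ β * Complex.exp (Complex.I * (ω : ℂ) * (x : ℂ)))
      (Set.Ici (1 : ℝ)) ∧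
    Summable (fun m : ℕ =>
      ‖(-1 : ℂ) ^ m * (-(Complex.I * (x : ℂ))) ^ m / ((m.factorial : ℂ) * (β + 1 + m))‖) ∧
    ∫ ω in Set.Ici (1 : ℝ), (ω : ℂ) ^ β * Complex.exp (Complex.I * (ω : ℂ) * (x : ℂ))
      = Complex.Gamma (β + 1) * (-(Complex.I * (x : ℂ))) ^ (-(β + 1))
        - ∑' m : ℕ, (-1 : ℂ) ^ m * (-(Complex.I * (x : ℂ))) ^ m /
            ((m.factorial : ℂ) * (β + 1 + m)) := by
  have hs : ∀ m : ℕ, β + 1 + m ≠ 0 := by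
    intro m hm
    apply hβz (-(m + 1))
    push_cast
    linear_combination hm
  set z : ℂ := -(I * (x : ℂ)) with hz
  have hkz : ∀ t : ℝ, cexp (I * (t : ℂ) * (x : ℂ)) = cexp (-(z * t)) := by
    intro t; congr 1; rw [hz]; ring
  have hzre : z.re = 0 := by simp [hz]
  have hzs : z ∈ slitPlane := Or.inr (by simpa [hz] using hx)
  have hbd : IntegrableOn (fun t : ℝ => t ^ β.re) (Set.Ioi 1) :=
    integrableOn_Ioi_rpow_of_lt hβ one_pos
  have hmeas : ∀ w : ℂ, AEStronglyMeasurable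
      (fun t : ℝ => (t : ℂ) ^ β * cexp (-(w * t))) (volume.restrict (Set.Ioi 1)) :=
    fun w => ((continuousOn_kernel β w).mono
      (Set.Ioi_subset_Ioi zero_le_one)).aestronglyMeasurable measurableSet_Ioi
  have hle : ∀ w : ℂ, 0 ≤ w.re → ∀ᵐ t : ℝ ∂(volume.restrict (Set.Ioi 1)),
      ‖(t : ℂ) ^ β * cexp (-(w * t))‖ ≤ t ^ β.re := by
    intro w hw
    filter_upwards [ae_restrict_mem measurableSet_Ioi] with t ht
    have ht0 : 0 < t := one_pos.trans ht
    rw [norm_kernel _ _ ht0]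
    refine mul_le_of_le_one_right (by positivity) (Real.exp_le_one_iff.2 ?_)
    nlinarith
  simp_rw [hkz]
  refine ⟨?_, summable_norm_lowerSeries (β + 1) z, ?_⟩
  · rw [integrableOn_Ici_iff_integrableOn_Ioi]
    exact hbd.mono' (hmeas z) (hle z hzre.ge)
  rw [integral_Ici_eq_integral_Ioi]
  change _ = _ - lowerSeries (β + 1) z
  -- The rate `z` is purely imaginary, so approach it as `z + ε` from the right half-plane.
  have hpath : Tendsto (fun ε : ℝ => z + ε) (𝓝[>] 0) (𝓝 z) :=
    (Continuous.tendsto' (by fun_prop) 0 z (by simp)).mono_left nhdsWithin_le_nhds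
  have hL : Tendsto (fun ε : ℝ => ∫ t : ℝ in Set.Ioi 1, (t : ℂ) ^ β * cexp (-((z + ε) * t)))
      (𝓝[>] 0) (𝓝 (∫ t : ℝ in Set.Ioi 1, (t : ℂ) ^ β * cexp (-(z * t)))) := by
    refine tendsto_integral_filter_of_dominated_convergence (fun t : ℝ => t ^ β.re)
      (Eventually.of_forall fun ε => hmeas _) ?_ hbd ?_
    · filter_upwards [self_mem_nhdsWithin] with ε hε
      exact hle _ (by simpa [hzre] using (Set.mem_Ioi.1 hε).le)
    · refine Eventually.of_forall fun t => ?_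
      have hc : Continuous fun w : ℂ => (t : ℂ) ^ β * cexp (-(w * t)) := by fun_prop
      exact (hc.tendsto z).comp hpath
  have hR : Tendsto (fun ε : ℝ => Gamma (β + 1) * (z + ε) ^ (-(β + 1)) -
      lowerSeries (β + 1) (z + ε)) (𝓝[>] 0)
      (𝓝 (Gamma (β + 1) * z ^ (-(β + 1)) - lowerSeries (β + 1) z)) := by
    have hc : ContinuousAt (fun w : ℂ => Gamma (β + 1) * w ^ (-(β + 1)) -
        lowerSeries (β + 1) w) z :=
      (continuousAt_const.mul (continuousAt_cpow_const hzs)).sub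
        (continuous_lowerSeries _).continuousAt
    exact hc.tendsto.comp hpath
  refine tendsto_nhds_unique (hL.congr' ?_) hR
  filter_upwards [self_mem_nhdsWithin] with ε hε
  obtain ⟨n, hn⟩ := exists_nat_gt (-(β + 1).re)
  have h := upper_eq (z := z + ε) (by simpa [hzre] using hε) n (β + 1) hs (by linarith)
  rwa [add_sub_cancel_right] at h
end

section
/- Let a, b ∈ ℂ \ {0} and γ ∈ ℂ with Re(γ) > −1, and let φ : ℝ → ℂ be a Schwartz function. Set n_γ = ⌈Re(γ)⌉ + 1. Then there exists a constant C > 0 (depending on a, b, γ, φ but not on T or x) such that for every T ∈ [2, 4) and every x ∈ ℝ \ {0}: |(D_{a,b}^γ φ)(x) − T^{γ+1}·(D_{a,b}^γ φ)(T x)| ≤ C / |x|^{n_γ}. -/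
/-!
Write `F` for the Fourier transform of `φ` and `J_γ(G, x) = ∫_{ω > 0} G(ω) ω^γ e^{iωx} dω`.
Splitting the line at the origin, `2π (D φ)(x) = a J_γ(F, x) + b J_γ(F(-·), -x)`. The multiplier
is homogeneous, so a dilation of the integration variable gives
`T^{γ+1} J_γ(G, T x) = J_γ(G(·/T), x)`. Hence the quantity to estimate is a combination of two
integrals `J_γ(G_T, ± x)` with `G_T(ω) = F(± ω) - F(± ω / T)`. For `T ∈ [2, 4)` these
functions satisfy all Schwartz bounds uniformly in `T`, and they vanish at `0`, so that
`‖G_T(ω)‖ ≤ A ω` on the half-line.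

The decay in `x` comes from integrating by parts (`J_parts`). One step replaces `J_α(G, x)` by
`J_α(G', x)` and `J_{α-1}(G, x)`, divided by `ix`. If `‖G(ω)‖ ≤ A ω^v` near `0` with
`0 ≤ v ≤ 1`, this can be repeated `n` times as long as `Re α + v - n > -1`
(`UnifSchwartz.exists_J_bound`, by induction on `n`): in `J_{α-1}(G)` both the exponent and the
number of steps drop by one, while for `G'` the loss of the vanishing order (at most one) is
compensated by the drop in the number of steps. With `v = 1` this admits `n = ⌈Re γ⌉ + 1` steps.
-/

open MeasureTheory Complex

open Set Filter Topology

/-- A family of functions on `ℝ`, all smooth, satisfying each of the Schwartz bounds with a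
constant independent of the member of the family. -/
def UnifSchwartz {ι : Type} (G : ι → ℝ → ℂ) : Prop :=
  (∀ i, ContDiff ℝ ((⊤ : ℕ∞) : WithTop ℕ∞) (G i)) ∧
    ∀ k m : ℕ, ∃ C : ℝ, ∀ i ω, |ω| ^ k * ‖iteratedDeriv m (G i) ω‖ ≤ C

/-! ### Half-line oscillatory integrals and integration by parts -/

/-- The half-line oscillatory integral `∫_{ω > 0} G(ω) ω^α e^{iωx} dω`. -/
noncomputable def J (α : ℂ) (G : ℝ → ℂ) (x : ℝ) : ℂ :=
  ∫ ω in Ioi (0 : ℝ), G ω * (ω : ℂ) ^ α * Complex.exp (I * (ω : ℂ) * (x : ℂ))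

lemma norm_exp_I_mul (ω x : ℝ) : ‖Complex.exp (I * (ω : ℂ) * (x : ℂ))‖ = 1 := by
  rw [Complex.norm_exp]; simp

lemma hasDerivAt_cpow_pos (α : ℂ) {ω : ℝ} (hω : 0 < ω) :
    HasDerivAt (fun t : ℝ => (t : ℂ) ^ α) (α * (ω : ℂ) ^ (α - 1)) ω := by
  have h := (hasDerivAt_id (ω : ℂ)).cpow_const (c := α) (by simp [hω])
  simpa using h.comp_ofReal

lemma hasDerivAt_exp_I_mul (x ω : ℝ) :
    HasDerivAt (fun t : ℝ => Complex.exp (I * (t : ℂ) * (x : ℂ)))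
      (I * x * Complex.exp (I * (ω : ℂ) * (x : ℂ))) ω := by
  have h : HasDerivAt (fun z : ℂ => Complex.exp (I * z * (x : ℂ)))
      (Complex.exp (I * (ω : ℂ) * (x : ℂ)) * (I * 1 * x)) (ω : ℂ) :=
    (((hasDerivAt_id (ω : ℂ)).const_mul I).mul_const (x : ℂ)).cexp
  convert h.comp_ofReal using 1
  ring

lemma continuousOn_cpow_pos (α : ℂ) : ContinuousOn (fun t : ℝ => (t : ℂ) ^ α) (Ioi 0) :=
  fun _ hω => (hasDerivAt_cpow_pos α hω).continuousAt.continuousWithinAt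

lemma integrableOn_mul_exp {f : ℝ → ℂ} {s : Set ℝ} (hf : IntegrableOn f s) (x : ℝ) :
    IntegrableOn (fun ω => f ω * Complex.exp (I * (ω : ℂ) * (x : ℂ))) s := by
  refine Integrable.mono hf (hf.aestronglyMeasurable.mul ?_) (ae_of_all _ fun ω => ?_)
  · exact Continuous.aestronglyMeasurable (by fun_prop)
  · rw [norm_mul, norm_exp_I_mul, mul_one]

/-- One integration by parts in `J α G x`. The decay at infinity needed for the boundary term
follows from integrability of the amplitude and of its derivative. -/
lemma J_parts {α : ℂ} {G : ℝ → ℂ} (hG : Differentiable ℝ G) (x : ℝ)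
    (h1 : IntegrableOn (fun ω : ℝ => G ω * (ω : ℂ) ^ α) (Ioi 0))
    (h2 : IntegrableOn (fun ω : ℝ => deriv G ω * (ω : ℂ) ^ α) (Ioi 0))
    (h3 : IntegrableOn (fun ω : ℝ => G ω * (ω : ℂ) ^ (α - 1)) (Ioi 0))
    (h0 : Tendsto (fun ω : ℝ => G ω * (ω : ℂ) ^ α) (𝓝[>] 0) (𝓝 0)) :
    I * x * J α G x = -(J α (deriv G) x + α * J (α - 1) G x) := by
  have hd : ∀ ω ∈ Ioi (0 : ℝ), HasDerivAt (fun ω : ℝ => G ω * (ω : ℂ) ^ α)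
      (deriv G ω * (ω : ℂ) ^ α + α * (G ω * (ω : ℂ) ^ (α - 1))) ω := by
    intro ω hω
    exact ((hG ω).hasDerivAt.mul (hasDerivAt_cpow_pos α hω)).congr_deriv (by ring)
  have hint : IntegrableOn (fun ω : ℝ => deriv G ω * (ω : ℂ) ^ α +
      α * (G ω * (ω : ℂ) ^ (α - 1))) (Ioi 0) := h2.add (h3.const_mul α)
  have hinf := tendsto_zero_of_hasDerivAt_of_integrableOn_Ioi hd hint h1
  -- multiplication by the unimodular exponential preserves convergence to zero
  have hexp : ∀ l : Filter ℝ, Tendsto (fun ω : ℝ => G ω * (ω : ℂ) ^ α) l (𝓝 0) →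
      Tendsto ((fun ω : ℝ => G ω * (ω : ℂ) ^ α) *
        fun ω : ℝ => Complex.exp (I * (ω : ℂ) * (x : ℂ))) l (𝓝 0) := by
    intro l hl
    rw [tendsto_zero_iff_norm_tendsto_zero] at hl ⊢
    refine hl.congr fun ω => ?_
    rw [Pi.mul_apply, norm_mul (G ω * (ω : ℂ) ^ α), norm_exp_I_mul, mul_one]
  have key := integral_Ioi_mul_deriv_eq_deriv_mul (a := (0 : ℝ)) hd
    (fun ω _ => hasDerivAt_exp_I_mul x ω) (a' := 0) (b' := 0)
    (by
      refine ((integrableOn_mul_exp h1 x).const_mul (I * x)).congr (ae_of_all _ fun ω => ?_)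
      simp only [Pi.mul_apply]; ring)
    (integrableOn_mul_exp hint x) (hexp _ h0) (hexp _ hinf)
  unfold J
  rw [← integral_const_mul, ← integral_const_mul,
    ← integral_add (integrableOn_mul_exp h2 x) ((integrableOn_mul_exp h3 x).const_mul α)]
  calc _ = _ := integral_congr_ae (ae_of_all _ fun ω => by ring)
    _ = _ := key
    _ = _ := by 
        rw [sub_zero, zero_sub, neg_inj]
        exact integral_congr_ae (ae_of_all _ fun ω => by simp only []; ring)

/-! ### Uniformly Schwartz families -/

section
variable {ι : Type} {G : ι → ℝ → ℂ}

lemma UnifSchwartz.differentiable (h : UnifSchwartz G) (i : ι) : Differentiable ℝ (G i) :=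
  (h.1 i).differentiable (by simp)

lemma UnifSchwartz.deriv (h : UnifSchwartz G) : UnifSchwartz (fun i => deriv (G i)) := by
  refine ⟨fun i => ((contDiff_infty_iff_deriv).1 (h.1 i)).2, fun k m => ?_⟩
  obtain ⟨C, hC⟩ := h.2 k (m + 1)
  refine ⟨C, fun i ω => ?_⟩
  rw [← iteratedDeriv_succ']
  exact hC i ω

lemma UnifSchwartz.sub {H : ι → ℝ → ℂ} (hG : UnifSchwartz G) (hH : UnifSchwartz H) :
    UnifSchwartz (fun i ω => G i ω - H i ω) := by
  refine ⟨fun i => (hG.1 i).sub (hH.1 i), fun k m => ?_⟩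
  obtain ⟨C, hC⟩ := hG.2 k m
  obtain ⟨D, hD⟩ := hH.2 k m
  refine ⟨C + D, fun i ω => ?_⟩
  rw [iteratedDeriv_fun_sub ((hG.1 i).of_le (by exact_mod_cast le_top)).contDiffAt
    ((hH.1 i).of_le (by exact_mod_cast le_top)).contDiffAt]
  calc _ ≤ |ω| ^ k * (‖iteratedDeriv m (G i) ω‖ + ‖iteratedDeriv m (H i) ω‖) := by
        gcongr; exact norm_sub_le _ _
    _ ≤ C + D := by rw [mul_add]; exact add_le_add (hC i ω) (hD i ω)

lemma UnifSchwartz.exists_norm_le (h : UnifSchwartz G) :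
    ∃ A : ℝ, ∀ i, ∀ ω : ℝ, 0 < ω → ‖G i ω‖ ≤ A * ω ^ (0 : ℝ) := by
  obtain ⟨C, hC⟩ := h.2 0 0
  exact ⟨C, fun i ω _ => by simpa using hC i ω⟩

/-- If all members of the family vanish at the origin, they vanish there to first order,
uniformly. -/
lemma UnifSchwartz.exists_norm_le_of_zero (h : UnifSchwartz G) (h0 : ∀ i, G i 0 = 0) :
    ∃ A : ℝ, ∀ i, ∀ ω : ℝ, 0 < ω → ‖G i ω‖ ≤ A * ω ^ (1 : ℝ) := by
  obtain ⟨C, hC⟩ := h.2 0 1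
  refine ⟨C, fun i ω hω => ?_⟩
  have := convex_univ.norm_image_sub_le_of_norm_deriv_le (f := G i) (C := C) (x := 0) (y := ω)
    (fun x _ => h.differentiable i x) (fun x _ => by simpa using hC i x) (mem_univ _) (mem_univ _)
  simpa [h0, abs_of_pos hω] using this

/-- A common integrable majorant for the amplitudes `G_i(ω) ω^α` on the half-line. -/
lemma UnifSchwartz.exists_majorant (h : UnifSchwartz G) {α : ℂ} {v A : ℝ}
    (hA : ∀ i, ∀ ω : ℝ, 0 < ω → ‖G i ω‖ ≤ A * ω ^ v) (hα : -1 < α.re + v) :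
    ∃ D : ℝ → ℝ, IntegrableOn D (Ioi 0) ∧
      ∀ i, ∀ ω ∈ Ioi (0 : ℝ), ‖G i ω * (ω : ℂ) ^ α‖ ≤ D ω := by
  obtain ⟨k, hk⟩ := exists_nat_ge (α.re + 2)
  obtain ⟨B, hB⟩ := h.2 k 0
  refine ⟨fun ω => if ω ≤ 1 then A * ω ^ (α.re + v) else B * ω ^ (-2 : ℝ), ?_, ?_⟩
  · rw [← Ioc_union_Ioi_eq_Ioi (zero_le_one' ℝ)]
    refine IntegrableOn.union ?_ ?_
    · have := (intervalIntegral.intervalIntegrable_rpow' (a := 0) (b := 1) hα).1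
      refine IntegrableOn.congr_fun (this.const_mul A) (fun ω hω => ?_) measurableSet_Ioc
      simp [hω.2]
    · have := integrableOn_Ioi_rpow_of_lt (a := -2) (by norm_num) (zero_lt_one' ℝ)
      refine IntegrableOn.congr_fun (this.const_mul B) (fun ω hω => ?_) measurableSet_Ioi
      simp [not_le.2 (mem_Ioi.1 hω)]
  · intro i ω hω
    have hω : 0 < ω := hω
    rw [norm_mul, norm_cpow_eq_rpow_re_of_pos hω]
    dsimp only
    split_ifs with h1
    · calc _ ≤ A * ω ^ v * ω ^ α.re := by gcongr; exact hA i ω hω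
        _ = _ := by rw [Real.rpow_add hω]; ring
    · have hb := hB i ω
      rw [iteratedDeriv_zero, abs_of_pos hω] at hb
      have h1 : 1 ≤ ω := (not_le.1 h1).le
      calc ‖G i ω‖ * ω ^ α.re ≤ ‖G i ω‖ * ω ^ ((k : ℝ) + (-2)) := by
            gcongr
            linarith
        _ = ω ^ k * ‖G i ω‖ * ω ^ (-2 : ℝ) := by
            rw [Real.rpow_add hω, Real.rpow_natCast]; ring
        _ ≤ _ := by gcongr

lemma UnifSchwartz.integrableOn (h : UnifSchwartz G) {α : ℂ} {v A : ℝ}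
    (hA : ∀ i, ∀ ω : ℝ, 0 < ω → ‖G i ω‖ ≤ A * ω ^ v) (hα : -1 < α.re + v) (i : ι) :
    IntegrableOn (fun ω : ℝ => G i ω * (ω : ℂ) ^ α) (Ioi 0) := by
  obtain ⟨D, hD, hle⟩ := h.exists_majorant hA hα
  refine Integrable.mono' hD ?_ ((ae_restrict_iff' measurableSet_Ioi).2 (ae_of_all _ (hle i)))
  exact ((h.1 i).continuous.continuousOn.mul (continuousOn_cpow_pos α)).aestronglyMeasurable
    measurableSet_Ioi

/-! ### Decay of the oscillatory integral -/

/-- Uniform decay of `J α (G i)`: if the family vanishes to order `v` at the origin, then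
`n` integrations by parts are possible as long as `Re α + v - n > -1`. -/
theorem UnifSchwartz.exists_J_bound (n : ℕ) : ∀ {G : ι → ℝ → ℂ} {α : ℂ} {v A : ℝ},
    UnifSchwartz G → 0 ≤ v → v ≤ 1 →
    (∀ i, ∀ ω : ℝ, 0 < ω → ‖G i ω‖ ≤ A * ω ^ v) → -1 < α.re + v - n →
    ∃ C : ℝ, ∀ i, ∀ x : ℝ, x ≠ 0 → ‖J α (G i) x‖ ≤ C / |x| ^ n := by
  induction n with
  | zero =>
    intro G α v A h _ _ hA hα
    obtain ⟨D, hD, hle⟩ := h.exists_majorant hA (by simpa using hα)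
    refine ⟨∫ ω in Ioi (0 : ℝ), D ω, fun i x _ => ?_⟩
    rw [pow_zero, div_one]
    refine norm_integral_le_of_norm_le hD
      ((ae_restrict_iff' measurableSet_Ioi).2 (ae_of_all _ fun ω hω => ?_))
    rw [norm_mul, norm_exp_I_mul, mul_one]
    exact hle i ω hω
  | succ n ih =>
    intro G α v A h hv0 hv1 hA hα
    push_cast at hα
    have hn : (0 : ℝ) ≤ n := n.cast_nonneg
    have hre : (α - 1).re = α.re - 1 := by simp
    obtain ⟨A', hA'⟩ := h.deriv.exists_norm_le
    obtain ⟨C₁, hC₁⟩ := ih h.deriv le_rfl zero_le_one hA' (α := α) (by linarith)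
    obtain ⟨C₂, hC₂⟩ := ih h hv0 hv1 hA (α := α - 1) (by rw [hre]; linarith)
    refine ⟨C₁ + ‖α‖ * C₂, fun i x hx => ?_⟩
    have h0 : Tendsto (fun ω : ℝ => G i ω * (ω : ℂ) ^ α) (𝓝[>] 0) (𝓝 0) := by
      have hs : 0 < α.re + v := by linarith
      have hlim : Tendsto (fun ω : ℝ => A * ω ^ (α.re + v)) (𝓝[>] 0) (𝓝 0) := by
        have := ((Real.continuousAt_rpow_const 0 (α.re + v) (Or.inr hs.le)).tendsto).const_mul A
        rw [Real.zero_rpow hs.ne', mul_zero] at this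
        exact this.mono_left nhdsWithin_le_nhds
      refine squeeze_zero_norm' ?_ hlim
      filter_upwards [self_mem_nhdsWithin] with ω hω
      have hω : 0 < ω := hω
      rw [norm_mul, norm_cpow_eq_rpow_re_of_pos hω, Real.rpow_add hω]
      calc _ ≤ A * ω ^ v * ω ^ α.re := by gcongr; exact hA i ω hω
        _ = _ := by ring
    have key := J_parts (h.differentiable i) x (h.integrableOn hA (by linarith) i)
      (h.deriv.integrableOn hA' (by linarith) i)
      (h.integrableOn (α := α - 1) hA (by rw [hre]; linarith) i) h0
    have hx' : 0 < |x| := abs_pos.2 hx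
    have hnorm : |x| * ‖J α (G i) x‖ ≤ (C₁ + ‖α‖ * C₂) / |x| ^ n := by
      calc |x| * ‖J α (G i) x‖ = ‖I * x * J α (G i) x‖ := by simp
        _ ≤ ‖J α (_root_.deriv (G i)) x‖ + ‖α‖ * ‖J (α - 1) (G i) x‖ := by
            rw [key, norm_neg, ← norm_mul]; exact norm_add_le _ _
        _ ≤ C₁ / |x| ^ n + ‖α‖ * (C₂ / |x| ^ n) := by
            gcongr
            · exact hC₁ i x hx
            · exact hC₂ i x hx
        _ = _ := by ring
    rw [pow_succ, ← div_div, le_div_iff₀ hx', mul_comm]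
    exact hnorm

/-- Dilates of a single Schwartz function, with ratios bounded away from `0` and `∞`, satisfy
uniform Schwartz bounds. -/
lemma unifSchwartz_dilates (ψ : SchwartzMap ℝ ℂ) (c : ι → ℝ) {m M : ℝ} (hm : 0 < m)
    (hc : ∀ i, m ≤ |c i| ∧ |c i| ≤ M) : UnifSchwartz (fun i ω => ψ (c i * ω)) := by
  refine ⟨fun i => (ψ.smooth ⊤).comp (contDiff_const.mul contDiff_id), fun k l => ?_⟩
  obtain ⟨C, hC⟩ := ψ.decay' k l
  refine ⟨M ^ l / m ^ k * C, fun i ω => ?_⟩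
  have hci := hc i
  have hpos : 0 < |c i| := hm.trans_le hci.1
  have hb := hC (c i * ω)
  rw [norm_iteratedFDeriv_eq_norm_iteratedDeriv] at hb
  rw [iteratedDeriv_comp_const_smul ((ψ.smooth l))]
  simp only [norm_smul, norm_pow, Real.norm_eq_abs, abs_mul, mul_pow] at hb ⊢
  have hC0 : 0 ≤ C := le_trans (by positivity) hb
  calc |ω| ^ k * (|c i| ^ l * ‖iteratedDeriv l (⇑ψ) (c i * ω)‖)
      = |c i| ^ l / |c i| ^ k *
        (|c i| ^ k * |ω| ^ k * ‖iteratedDeriv l (⇑ψ) (c i * ω)‖) := by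
        field_simp
    _ ≤ |c i| ^ l / |c i| ^ k * C := by gcongr; exact hb
    _ ≤ M ^ l / m ^ k * C := by
        have hM : 0 ≤ M := hpos.le.trans hci.2
        gcongr
        · exact hci.2
        · exact hci.1

end

/-! ### Reduction of the derivative operator to half-line integrals -/

lemma FT_eq_fourier (φ : SchwartzMap ℝ ℂ) (ω : ℝ) :
    FT φ ω = FourierTransform.fourier φ ((2 * Real.pi)⁻¹ * ω) := by
  rw [SchwartzMap.fourier_coe, Real.fourier_real_eq_integral_exp_smul]
  unfold FT
  congr 1
  ext x
  rw [smul_eq_mul, mul_comm]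
  congr 2
  have : (Real.pi : ℂ) ≠ 0 := by exact_mod_cast Real.pi_ne_zero
  push_cast
  field_simp

lemma J_dilate (γ : ℂ) (G : ℝ → ℂ) {T : ℝ} (hT : 0 < T) (x : ℝ) :
    (T : ℂ) ^ (γ + 1) * J γ G (T * x) = J γ (fun ω => G (T⁻¹ * ω)) x := by
  have h := integral_comp_mul_left_Ioi' (fun ω : ℝ => G (T⁻¹ * ω) * (ω : ℂ) ^ γ *
    Complex.exp (I * (ω : ℂ) * (x : ℂ))) 0 hT
  rw [mul_zero] at h
  unfold J
  rw [← h, ← integral_const_mul, ← integral_smul]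
  refine setIntegral_congr_fun measurableSet_Ioi fun ω hω => ?_
  have hω : 0 < ω := hω
  have hT' : (T : ℂ) ≠ 0 := by exact_mod_cast hT.ne'
  simp only [Complex.real_smul]
  rw [inv_mul_cancel_left₀ hT.ne', cpow_add _ _ hT', cpow_one, ofReal_mul T ω,
    mul_cpow_ofReal_nonneg hT.le hω.le, ofReal_mul]
  ring_nf

/-- Splitting the integral defining `D_{a,b}^γ φ` at the origin. -/
lemma Dop_eq (a b γ : ℂ) (φ : SchwartzMap ℝ ℂ) (x : ℝ)
    (hp : IntegrableOn (fun ω : ℝ => FT φ ω * (ω : ℂ) ^ γ) (Ioi 0))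
    (hn : IntegrableOn (fun ω : ℝ => FT φ (-ω) * (ω : ℂ) ^ γ) (Ioi 0)) :
    Dop a b γ φ x = (1 / (2 * (Real.pi : ℂ))) *
      (a * J γ (FT φ) x + b * J γ (fun ω => FT φ (-ω)) (-x)) := by
  set f : ℝ → ℂ := fun ω => FT φ ω * hab a b γ ω * Complex.exp (I * (ω : ℂ) * (x : ℂ)) with hf
  have e1 : EqOn (fun ω : ℝ => a * (FT φ ω * (ω : ℂ) ^ γ *
      Complex.exp (I * (ω : ℂ) * (x : ℂ)))) f (Ioi 0) := by
    intro ω hω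
    have hω : 0 < ω := hω
    simp only [hf, hab, if_pos hω]; ring
  have e2 : EqOn (fun ω : ℝ => b * (FT φ (-ω) * (ω : ℂ) ^ γ *
      Complex.exp (I * (ω : ℂ) * ((-x : ℝ) : ℂ)))) (fun ω => f (-ω)) (Ioi 0) := by
    intro ω hω
    have hω : 0 < ω := hω
    have h1 : ¬ 0 < -ω := by linarith
    have h2 : -ω < 0 := by linarith
    simp only [hf, hab, if_neg h1, if_pos h2, neg_neg]
    push_cast
    ring_nf
  have i1 : IntegrableOn f (Ioi 0) :=
    IntegrableOn.congr_fun ((integrableOn_mul_exp hp x).const_mul a) e1 measurableSet_Ioi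
  have i2 : IntegrableOn (fun ω => f (-ω)) (Ioi 0) :=
    IntegrableOn.congr_fun ((integrableOn_mul_exp hn (-x)).const_mul b) e2 measurableSet_Ioi
  have i3 : IntegrableOn f (Iic 0) := by
    rw [integrableOn_Iic_iff_integrableOn_Iio]
    have := (Measure.measurePreserving_neg (volume : Measure ℝ)).integrableOn_comp_preimage
      (Homeomorph.neg ℝ).measurableEmbedding (f := f) (s := Iio 0)
    refine this.1 ?_
    simpa [Function.comp_def] using i2
  have hs := intervalIntegral.integral_Iic_add_Ioi i3 i1
  have hneg := integral_comp_neg_Ioi 0 f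
  rw [neg_zero] at hneg
  unfold Dop
  change _ * ∫ ω, f ω = _
  rw [← hs, ← hneg, ← setIntegral_congr_fun measurableSet_Ioi e1,
    ← setIntegral_congr_fun measurableSet_Ioi e2, integral_const_mul, integral_const_mul]
  unfold J
  ring

lemma J_sub {γ : ℂ} {G H : ℝ → ℂ} (x : ℝ)
    (hG : IntegrableOn (fun ω : ℝ => G ω * (ω : ℂ) ^ γ) (Ioi 0))
    (hH : IntegrableOn (fun ω : ℝ => H ω * (ω : ℂ) ^ γ) (Ioi 0)) :
    J γ G x - J γ H x = J γ (fun ω => G ω - H ω) x := by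
  unfold J
  rw [← integral_sub (integrableOn_mul_exp hG x) (integrableOn_mul_exp hH x)]
  congr 1
  ext ω
  ring

/-- The uniform decay estimate for `J γ G x - T^{γ+1} J γ G (T x)`, where `G` is a fixed dilate of
a Schwartz function. The dilation ratio `c` may be negative. -/
lemma exists_J_sub_bound (ψ : SchwartzMap ℝ ℂ) {c : ℝ} (hc : c ≠ 0) {γ : ℂ} {n : ℕ}
    (hγ : -1 < γ.re) (hn : (n : ℝ) - 1 < γ.re) :
    IntegrableOn (fun ω : ℝ => ψ (c * ω) * (ω : ℂ) ^ γ) (Ioi 0) ∧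
    ∃ C : ℝ, ∀ T ∈ Ico (2 : ℝ) 4, ∀ x : ℝ, x ≠ 0 →
      ‖J γ (fun ω => ψ (c * ω)) x - (T : ℂ) ^ (γ + 1) * J γ (fun ω => ψ (c * ω)) (T * x)‖ ≤
        C / |x| ^ (n + 1) := by
  have hc' : 0 < |c| := abs_pos.2 hc
  have u1 : UnifSchwartz (fun (_ : Ico (2 : ℝ) 4) ω => ψ (c * ω)) :=
    unifSchwartz_dilates ψ _ hc' fun _ => ⟨le_rfl, le_rfl⟩
  have u2 : UnifSchwartz (fun (T : Ico (2 : ℝ) 4) ω => ψ (c * T.1⁻¹ * ω)) := by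
    refine unifSchwartz_dilates ψ _ (m := |c| * 4⁻¹) (M := |c| * 2⁻¹) (by positivity) ?_
    rintro ⟨T, hT2, hT4⟩
    have hT : 0 < T := by linarith
    rw [abs_mul, abs_of_pos (inv_pos.2 hT)]
    constructor <;> gcongr
  obtain ⟨A₁, hA₁⟩ := u1.exists_norm_le
  obtain ⟨A₂, hA₂⟩ := u2.exists_norm_le
  have i1 := u1.integrableOn (α := γ) hA₁ (by simpa using hγ)
  have i2 := u2.integrableOn (α := γ) hA₂ (by simpa using hγ)
  have u := u1.sub u2
  obtain ⟨A, hA⟩ := u.exists_norm_le_of_zero (by simp)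
  obtain ⟨C, hC⟩ := UnifSchwartz.exists_J_bound (n + 1) u zero_le_one le_rfl hA (α := γ)
    (by push_cast; linarith)
  refine ⟨i1 ⟨2, by norm_num⟩, C, fun T hT x hx => ?_⟩
  rw [J_dilate γ _ (by linarith [hT.1] : 0 < T)]
  simp only [← mul_assoc]
  rw [J_sub x (i1 ⟨T, hT⟩) (i2 ⟨T, hT⟩)]
  exact hC ⟨T, hT⟩ x hx

/-- uniform scaling-difference bound for `D_{a,b}^γ φ`:
`|(D φ)(x) − T^{γ+1} (D φ)(Tx)| ≤ C/|x|^{n_γ}` for `T ∈ [2,4)`, with `n_γ = ⌈Re γ⌉ + 1`. -/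
theorem statement19 (a b γ : ℂ) (ha : a ≠ 0) (hb : b ≠ 0) (hγ : -1 < γ.re)
    (φ : SchwartzMap ℝ ℂ) :
    ∃ C : ℝ, 0 < C ∧ ∀ T : ℝ, T ∈ Set.Ico (2 : ℝ) 4 → ∀ x : ℝ, x ≠ 0 →
      ‖Dop a b γ ⇑φ x - (T : ℂ) ^ (γ + 1) * Dop a b γ ⇑φ (T * x)‖ ≤
        C / |x| ^ (⌈γ.re⌉ + 1) := by
  have hceil : 0 ≤ ⌈γ.re⌉ := by
    have : -1 < ⌈γ.re⌉ := by rw [Int.lt_ceil]; simpa using hγ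
    omega
  obtain ⟨n, hn⟩ := Int.eq_ofNat_of_zero_le hceil
  have hn' : (n : ℝ) - 1 < γ.re := by
    have h := Int.ceil_lt_add_one γ.re
    rw [hn, Int.cast_natCast] at h
    linarith
  have hpi : (0 : ℝ) < (2 * Real.pi)⁻¹ := by positivity
  set ψ : SchwartzMap ℝ ℂ := FourierTransform.fourier φ with hψ
  have e1 : FT φ = fun ω => ψ ((2 * Real.pi)⁻¹ * ω) := funext (FT_eq_fourier φ)
  have e2 : (fun ω => FT φ (-ω)) = fun ω => ψ (-(2 * Real.pi)⁻¹ * ω) := by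
    ext ω
    rw [FT_eq_fourier, mul_neg, neg_mul]
  obtain ⟨i1, C₁, hC₁⟩ := exists_J_sub_bound ψ hpi.ne' hγ hn'
  obtain ⟨i2, C₂, hC₂⟩ := exists_J_sub_bound ψ (neg_ne_zero.2 hpi.ne') hγ hn'
  have hD : ∀ x, Dop a b γ φ x = (1 / (2 * (Real.pi : ℂ))) *
      (a * J γ (fun ω => ψ ((2 * Real.pi)⁻¹ * ω)) x +
        b * J γ (fun ω => ψ (-(2 * Real.pi)⁻¹ * ω)) (-x)) := by
    intro x
    rw [Dop_eq a b γ φ x (by simpa only [e1] using i1)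
      (by simpa only [← congrFun e2] using i2), e2, ← e1]
  set c : ℂ := 1 / (2 * (Real.pi : ℂ))
  set K : ℝ := ‖c‖ * (‖a‖ * C₁ + ‖b‖ * C₂)
  -- the maximum with `1` only serves to make the constant positive
  refine ⟨max K 1, by positivity, fun T hT x hx => ?_⟩
  have hx' : 0 < |x| := abs_pos.2 hx
  have hpow : |x| ^ (⌈γ.re⌉ + 1) = |x| ^ (n + 1) := by
    rw [hn]; exact_mod_cast zpow_natCast |x| (n + 1)
  have b1 := hC₁ T hT x hx
  have b2 := hC₂ T hT (-x) (neg_ne_zero.2 hx)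
  rw [abs_neg, mul_neg] at b2
  rw [hpow, hD, hD]
  set P := J γ (fun ω => ψ ((2 * Real.pi)⁻¹ * ω))
  set Q := J γ (fun ω => ψ (-(2 * Real.pi)⁻¹ * ω))
  calc _ = ‖c * (a * (P x - (T : ℂ) ^ (γ + 1) * P (T * x)) +
        b * (Q (-x) - (T : ℂ) ^ (γ + 1) * Q (-(T * x))))‖ := by congr 1; ring
    _ ≤ ‖c‖ * (‖a‖ * (C₁ / |x| ^ (n + 1)) + ‖b‖ * (C₂ / |x| ^ (n + 1))) := by
        rw [norm_mul]
        gcongr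
        refine (norm_add_le _ _).trans ?_
        rw [norm_mul, norm_mul]
        gcongr
    _ = K / |x| ^ (n + 1) := by ring
    _ ≤ _ := by gcongr; exact le_max_left _ _
end
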